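/- (Multilateral analogue of Bailey's ₃ψ₃ summation, δ = 0 case.) Let n be a positive integer and q, s, a, x ∈ ℂ with 0 < |q| < 1, a ≠ 0, x ≠ 0, s ≠ 0. Assume that none of s, as, x, ax, sx^{-1}, asx equals q^m for any integer m (so that all factors below are nonzero), and assume the family over μ ∈ ℤⁿ on the right-hand side is absolutely summable. Then ∏_{i=1}^{n-1} (1 + q^{n-i}) · [(sx^{-1})_{∞ⁿ} (asx)_{∞ⁿ} (q^{2n-1})_{∞ⁿ} (q^{2n-1}/a)_{∞ⁿ} / ((s)_{∞ⁿ} (as)_{∞ⁿ} (q^{2n-1}x)_{∞ⁿ} (q^{2n-1}/(ax))_{∞ⁿ})] = ∑_{μ ∈ ℤⁿ} q^{(1−n)|μ| + 2n(μ)} s^{|μ|} · [(q^{2n-1}/(as);q)_μ (x^{-1};q)_μ (ax;q)_μ / ((as;q)_μ (q^{2n-1}x;q)_μ (q^{2n-1}/(ax);q)_μ)] · ∏_{1 ≤ i < j ≤ n} [(1 − q^{j−i+μ_i−μ_j})(1 − q^{2n−i−j+μ_i+μ_j}) / ((1 − q^{j−i})² (1 − q^{2n−i−j})²)]. -/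

import Mathlib

/-- The finite q-Pochhammer symbol `(a;q)_k = ∏_{i=0}^{k-1} (1 - a qⁱ)`. -/
noncomputable def qPoch (a q : ℂ) (k : ℕ) : ℂ :=
  ∏ i ∈ Finset.range k, (1 - a * q ^ i)

/-- The infinite q-Pochhammer symbol `(a;q)_∞ = ∏_{i=0}^{∞} (1 - a qⁱ)`. -/
noncomputable def qPochInf (a q : ℂ) : ℂ :=
  ∏' i : ℕ, (1 - a * q ^ i)

/-- The q-Pochhammer symbol extended to an arbitrary integer index:
`(a;q)_k = (a;q)_∞ / (a q^k;q)_∞`. -/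
noncomputable def qPochInt (a q : ℂ) (k : ℤ) : ℂ :=
  qPochInf a q / qPochInf (a * q ^ k) q

/-- The `t = q` specialization of the partition q-Pochhammer symbol, extended to
integer vectors: `(a;q)_μ = ∏_{i=1}^{n} (a q^{1-i};q)_{μ_i}`. -/
noncomputable def qPochIntVec (n : ℕ) (a q : ℂ) (μ : Fin n → ℤ) : ℂ :=
  ∏ i : Fin n, qPochInt (a * q ^ (-((i : ℕ) : ℤ))) q (μ i)

/-- The multiple infinite q-Pochhammer symbol `(a)_{∞ⁿ} = ∏_{i=1}^{n} (a q^{1-i};q)_∞`. -/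
noncomputable def qPochInfVec (n : ℕ) (a q : ℂ) : ℂ :=
  ∏ i : Fin n, qPochInf (a * q ^ (-((i : ℕ) : ℤ))) q

section

open Filter Topology Finset Polynomial


noncomputable def vRat (q b c d : ℂ) (k : ℕ) : ℂ :=
  (1 - b * q ^ k) * (1 - c * q ^ k) * (1 - d * q ^ k) /
    ((1 - q ^ (k + 1) / b) * (1 - q ^ (k + 1) / c) * (1 - q ^ (k + 1) / d)) * (q / (b * c * d))

noncomputable def vW (q b c d : ℂ) (y : ℕ) : ℂ := ∏ k ∈ range y, vRat q b c d k

noncomputable def vM (q b c d : ℂ) (y : ℕ) : ℂ :=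
  if y = 0 then 1 else vW q b c d y * (1 + q ^ y)

noncomputable def vS (q b c d : ℂ) : ℂ := ∑' y, vM q b c d y

def ND (q t : ℂ) : Prop := t ≠ 0 ∧ ∀ k : ℕ, 1 - q ^ (k + 1) / t ≠ 0

theorem vW_zero (q b c d : ℂ) : vW q b c d 0 = 1 := by simp [vW]
theorem vW_succ (q b c d : ℂ) (y : ℕ) : vW q b c d (y + 1) = vW q b c d y * vRat q b c d y := by
  simp [vW, prod_range_succ]

theorem vM_zero (q b c d : ℂ) : vM q b c d 0 = 1 := by simp [vM]
theorem vM_succ (q b c d : ℂ) (y : ℕ) :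
    vM q b c d (y + 1) = vW q b c d (y + 1) * (1 + q ^ (y + 1)) := by simp [vM]

theorem vRat_swap (q b c d : ℂ) (k : ℕ) : vRat q b c d k = vRat q b d c k := by
  unfold vRat
  rw [show b * c * d = b * d * c by ring]
  congr 1
  congr 1 <;> ring
theorem vW_swap (q b c d : ℂ) (k : ℕ) : vW q b c d k = vW q b d c k := by
  unfold vW; exact prod_congr rfl (fun k _ => vRat_swap q b c d k)
theorem vS_swap (q b c d : ℂ) : vS q b c d = vS q b d c := by
  unfold vS vM; simp_rw [vW_swap q b c d]

theorem ND_mul {q c : ℂ} (hq : q ≠ 0) (hc : ND q c) (hc1 : c ≠ 1) : ND q (c * q) := by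
  obtain ⟨h0, h⟩ := hc
  refine ⟨mul_ne_zero h0 hq, fun k => ?_⟩
  rcases k with _ | k
  · have : q ^ (0 + 1) / (c * q) = 1 / c := by field_simp; ring
    rw [this, sub_ne_zero]
    intro h1
    apply hc1
    field_simp at h1
    exact h1
  · have : q ^ (k + 1 + 1) / (c * q) = q ^ (k + 1) / c := by field_simp; ring
    rw [this]; exact h k

theorem ratio_phi {q b c d : ℂ} (hq : q ≠ 0) (hb : ND q b) (hc : ND q c) (hd : ND q d)
    (hcq : ND q (c * q)) (y : ℕ) :
    vRat q b (c * q) d y * ((1 - c * q ^ y) * (1 - c / q ^ y)) =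
      vRat q b c d y * ((1 - c * q ^ (y + 1)) * (1 - c / q ^ (y + 1))) := by
  have h1 := hb.2 y
  have h2 := hc.2 y
  have h3 := hd.2 y
  have h4 := hcq.2 y
  have b0 := hb.1
  have c0 := hc.1
  have d0 := hd.1
  have e1 : q ^ (y + 1) / (c * q) = q ^ y / c := by field_simp; ring
  unfold vRat
  rw [e1] at h4 ⊢
  have hz : q ^ y ≠ 0 := pow_ne_zero _ hq
  rw [pow_succ] at *
  set z := q ^ y
  have f4 : 1 - c / z = -(c / z) * (1 - z / c) := by field_simp; ring
  have f2 : 1 - c / (z * q) = -(c / (z * q)) * (1 - z * q / c) := by field_simp; ring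
  rw [f4, f2]
  generalize 1 - z * q / b = B at *
  generalize 1 - z * q / d = D at *
  generalize 1 - z * q / c = C at *
  generalize 1 - z / c = E at *
  field_simp
  

theorem vW_phi {q b c d : ℂ} (hq : q ≠ 0) (hb : ND q b) (hc : ND q c) (hd : ND q d)
    (hcq : ND q (c * q)) (y : ℕ) :
    (1 - c) ^ 2 * vW q b (c * q) d y = vW q b c d y * ((1 - c * q ^ y) * (1 - c / q ^ y)) := by
  induction y with
  | zero => simp [vW_zero]; ring
  | succ y ih =>
    rw [vW_succ, ← mul_assoc, ih, vW_succ]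
    linear_combination vW q b c d y * ratio_phi hq hb hc hd hcq y

theorem vM_phi {q b c d : ℂ} (hq : q ≠ 0) (hb : ND q b) (hc : ND q c) (hd : ND q d)
    (hcq : ND q (c * q)) (y : ℕ) :
    (1 - c) ^ 2 * vM q b (c * q) d y = vM q b c d y * ((1 - c * q ^ y) * (1 - c / q ^ y)) := by
  rcases y with _ | y
  · simp [vM_zero]; ring
  · rw [vM_succ, vM_succ, ← mul_assoc, vW_phi hq hb hc hd hcq]; ring

theorem tele {q b c d : ℂ} (hq : q ≠ 0) (hb : ND q b) (hc : ND q c) (hd : ND q d) (N : ℕ) :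
    ∑ y ∈ range (N + 1), vM q b c d y * ((1 - b * c * d) * ((1 - c * q ^ y) * (1 - c / q ^ y)) -
      (1 - c) * (1 - b * c) * (1 - c * d)) =
    - c * (vW q b c d N * (q ^ N)⁻¹) * ((1 - b * q ^ N) * (1 - c * q ^ N) * (1 - d * q ^ N)) := by
  induction N with
  | zero => simp [vM_zero, vW_zero]; ring
  | succ N ih =>
    rw [sum_range_succ, ih, vM_succ, vW_succ]
    have h1 := hb.2 N
    have h2 := hc.2 N
    have h3 := hd.2 N
    have b0 := hb.1
    have c0 := hc.1
    have d0 := hd.1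
    have hz : q ^ N ≠ 0 := pow_ne_zero _ hq
    have key : (1 - b * q ^ N) * (1 - c * q ^ N) * (1 - d * q ^ N) =
       vRat q b c d N * ((1 - q ^ (N + 1) / b) * (1 - q ^ (N + 1) / c) * (1 - q ^ (N + 1) / d)) * (b * c * d) / q := by
      unfold vRat
      generalize 1 - q ^ (N + 1) / b = B at *
      generalize 1 - q ^ (N + 1) / d = D at *
      generalize 1 - q ^ (N + 1) / c = C at *
      field_simp
    rw [key]
    generalize vRat q b c d N = R
    generalize vW q b c d N = W
    rw [pow_succ]
    generalize q ^ N = z at *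
    field_simp
    ring

theorem vM_bound {q : ℂ} (hq1 : ‖q‖ < 1) (b c d : ℂ) (y : ℕ) :
    ‖vM q b c d y‖ ≤ 2 * ‖vW q b c d y‖ := by
  rcases y with _ | y
  · simp [vM_zero, vW_zero]
  · rw [vM_succ, norm_mul, mul_comm]
    gcongr
    calc ‖1 + q ^ (y + 1)‖ ≤ ‖(1:ℂ)‖ + ‖q ^ (y + 1)‖ := norm_add_le _ _
      _ ≤ 1 + 1 := by
        rw [norm_one, norm_pow]; gcongr; exact pow_le_one₀ (norm_nonneg _) hq1.le
      _ = 2 := by norm_num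

theorem C_bound {q : ℂ} (hq : q ≠ 0) (hq1 : ‖q‖ < 1) (y : ℕ) :
    ‖q ^ y + (q ^ y)⁻¹‖ ≤ 2 * ‖(q ^ y)⁻¹‖ := by
  have h : ‖q ^ y‖ ≤ 1 := by rw [norm_pow]; exact pow_le_one₀ (norm_nonneg _) hq1.le
  have h0 : 0 < ‖q ^ y‖ := norm_pos_iff.2 (pow_ne_zero _ hq)
  have h2 : 1 ≤ ‖(q ^ y)⁻¹‖ := by rw [norm_inv]; exact (one_le_inv₀ h0).2 h
  calc _ ≤ ‖q ^ y‖ + ‖(q ^ y)⁻¹‖ := norm_add_le _ _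
    _ ≤ _ := by linarith

/-- moments are summable -/
theorem vM_C_summable {q b c d : ℂ} (hq : q ≠ 0) (hq1 : ‖q‖ < 1) (K : ℕ)
    (H : Summable (fun y => vW q b c d y * ((q ^ K)⁻¹) ^ y)) {k : ℕ} (hk : k ≤ K) :
    Summable (fun y => vM q b c d y * (q ^ y + (q ^ y)⁻¹) ^ k) := by
  refine Summable.of_norm_bounded (g := fun y => 2 * 2 ^ k * ‖vW q b c d y * ((q ^ K)⁻¹) ^ y‖)
    (H.norm.mul_left _) (fun y => ?_)
  have h : ‖q ^ y‖ ≤ 1 := by rw [norm_pow]; exact pow_le_one₀ (norm_nonneg _) hq1.le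
  have h0 : 0 < ‖q ^ y‖ := norm_pos_iff.2 (pow_ne_zero _ hq)
  have h2 : 1 ≤ ‖(q ^ y)⁻¹‖ := by rw [norm_inv]; exact (one_le_inv₀ h0).2 h
  rw [norm_mul, norm_mul, norm_pow, show ((q ^ K)⁻¹) ^ y = ((q ^ y)⁻¹) ^ K by
    rw [inv_pow, inv_pow, ← pow_mul, ← pow_mul, mul_comm], norm_pow]
  calc _ ≤ (2 * ‖vW q b c d y‖) * (2 * ‖(q ^ y)⁻¹‖) ^ k := by
        gcongr
        · exact vM_bound hq1 b c d y
        · exact C_bound hq hq1 y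
    _ = (2 * ‖vW q b c d y‖) * (2 ^ k * ‖(q ^ y)⁻¹‖ ^ k) := by rw [mul_pow]
    _ ≤ (2 * ‖vW q b c d y‖) * (2 ^ k * ‖(q ^ y)⁻¹‖ ^ K) := by
        gcongr
    _ = _ := by ring

theorem vS_rec {q b c d : ℂ} (hq : q ≠ 0) (hq1 : ‖q‖ < 1) (hb : ND q b) (hc : ND q c) (hd : ND q d)
    (hc1 : c ≠ 1) (H : Summable (fun y => vW q b c d y * (q ^ y)⁻¹)) :
    (1 - b * c * d) * (1 - c) * vS q b (c * q) d = (1 - b * c) * (1 - c * d) * vS q b c d := by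
  have hcq := ND_mul hq hc hc1
  have H' : Summable (fun y => vW q b c d y * ((q ^ 1)⁻¹) ^ y) := by
    simpa using H
  have s0 := vM_C_summable hq hq1 1 H' (k := 0) (by norm_num)
  have s1 := vM_C_summable hq hq1 1 H' (k := 1) (by norm_num)
  simp only [pow_zero, mul_one, pow_one] at s0 s1
  have ephi : ∀ y : ℕ, (1 - c * q ^ y) * (1 - c / q ^ y) = (1 + c ^ 2) - c * (q ^ y + (q ^ y)⁻¹) := by
    intro y
    have hz : q ^ y ≠ 0 := pow_ne_zero _ hq
    field_simp
    ring
  have s2 : Summable (fun y => vM q b c d y * ((1 - c * q ^ y) * (1 - c / q ^ y))) := by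
    refine ((s0.mul_left (1 + c ^ 2)).sub (s1.mul_left c)).congr (fun y => ?_)
    rw [ephi]; ring
  have s3 : Summable (fun y => vM q b c d y * ((1 - b * c * d) * ((1 - c * q ^ y) * (1 - c / q ^ y)) -
      (1 - c) * (1 - b * c) * (1 - c * d))) := by
    refine ((s2.mul_left (1 - b * c * d)).sub (s0.mul_left ((1 - c) * (1 - b * c) * (1 - c * d)))).congr (fun y => ?_)
    ring
  have t1 : Tendsto (fun N => - c * (vW q b c d N * (q ^ N)⁻¹) * ((1 - b * q ^ N) * (1 - c * q ^ N) * (1 - d * q ^ N))) atTop (𝓝 (- c * 0 * ((1 - b * 0) * (1 - c * 0) * (1 - d * 0)))) := by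
    have hqt : Tendsto (fun N : ℕ => q ^ N) atTop (𝓝 0) := tendsto_pow_atTop_nhds_zero_of_norm_lt_one hq1
    have hw := H.tendsto_atTop_zero
    exact (hw.const_mul _).mul ((((hqt.const_mul b).const_sub 1).mul ((hqt.const_mul c).const_sub 1)).mul
      ((hqt.const_mul d).const_sub 1))
  have t2 := (s3.hasSum.tendsto_sum_nat).comp (tendsto_add_atTop_nat 1)
  have t3 := tendsto_nhds_unique (t2.congr (fun N => tele hq hb hc hd N)) t1
  have e1 : ∑' y, vM q b c d y * ((1 - b * c * d) * ((1 - c * q ^ y) * (1 - c / q ^ y)) -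
      (1 - c) * (1 - b * c) * (1 - c * d)) = (1 - b * c * d) * ((1 - c) ^ 2 * vS q b (c * q) d)
       - ((1 - c) * (1 - b * c) * (1 - c * d)) * vS q b c d := by
    unfold vS
    rw [← tsum_mul_left, ← tsum_mul_left, ← tsum_mul_left]
    simp_rw [vM_phi hq hb hc hd hcq]
    rw [← (s2.mul_left _).tsum_sub (s0.mul_left _)]
    congr 1; ext y; ring
  rw [e1] at t3
  have : (1 - c) ≠ 0 := sub_ne_zero.2 (Ne.symm hc1)
  apply mul_left_cancel₀ this
  linear_combination t3

theorem vRat_tendsto {q b c d : ℂ} (hq1 : ‖q‖ < 1) :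
    Tendsto (fun y => vRat q b c d y) atTop (𝓝 (q / (b * c * d))) := by
  have hqt : Tendsto (fun N : ℕ => q ^ N) atTop (𝓝 0) := tendsto_pow_atTop_nhds_zero_of_norm_lt_one hq1
  have hqt' : Tendsto (fun N : ℕ => q ^ (N + 1)) atTop (𝓝 0) := hqt.comp (tendsto_add_atTop_nat 1)
  have := (((((hqt.const_mul b).const_sub 1).mul ((hqt.const_mul c).const_sub 1)).mul
      ((hqt.const_mul d).const_sub 1)).div ((((hqt'.div_const b).const_sub 1).mul
      ((hqt'.div_const c).const_sub 1)).mul ((hqt'.div_const d).const_sub 1)) (by simp)).mul_const (q / (b * c * d))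
  simpa [vRat] using this

theorem vW_summable {q b c d t : ℂ} (hq1 : ‖q‖ < 1) (ht : ‖q / (b * c * d) * t‖ < 1) :
    Summable (fun y => vW q b c d y * t ^ y) := by
  obtain ⟨r, hr, hr1⟩ := exists_between ht
  have h1 : Tendsto (fun y => ‖vRat q b c d y * t‖) atTop (𝓝 ‖q / (b * c * d) * t‖) :=
    ((vRat_tendsto hq1).mul_const t).norm
  refine summable_of_ratio_norm_eventually_le hr1 ?_
  filter_upwards [h1.eventually (gt_mem_nhds hr)] with y hy
  rw [vW_succ, pow_succ, show vW q b c d y * vRat q b c d y * (t ^ y * t) =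
    (vRat q b c d y * t) * (vW q b c d y * t ^ y) by ring, norm_mul]
  gcongr




theorem qInf_mult {q : ℂ} (hq1 : ‖q‖ < 1) (a : ℂ) : Multipliable (fun i : ℕ => 1 - a * q ^ i) := by
  have : Summable (fun i : ℕ => ‖-(a * q ^ i)‖) := by
    simp only [norm_neg, norm_mul, norm_pow]
    exact (summable_geometric_of_lt_one (norm_nonneg _) hq1).mul_left _
  simpa [sub_eq_add_neg] using multipliable_one_add_of_summable this

theorem qInf_tendsto {q : ℂ} (hq1 : ‖q‖ < 1) (a : ℂ) : Tendsto (fun N => qPoch a q N) atTop (𝓝 (qPochInf a q)) :=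
  (qInf_mult hq1 a).hasProd.tendsto_prod_nat

theorem qInf_tail {q : ℂ} (hq1 : ‖q‖ < 1) (a : ℂ) (N : ℕ) : qPochInf a q = qPoch a q N * qPochInf (a * q ^ N) q := by
  have h1 := (qInf_tendsto hq1 a).comp (tendsto_add_atTop_nat N)
  have h2 := (qInf_tendsto hq1 (a * q ^ N)).const_mul (qPoch a q N)
  refine tendsto_nhds_unique h1 (h2.congr (fun M => ?_))
  simp only [qPoch, Function.comp]
  rw [add_comm M N, prod_range_add]
  congr 1
  exact prod_congr rfl (fun i _ => by rw [pow_add]; ring)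

theorem qInf_ne_zero {q : ℂ} (hq1 : ‖q‖ < 1) (a : ℂ) (h : ∀ k : ℕ, 1 - a * q ^ k ≠ 0) : qPochInf a q ≠ 0 := by
  have : Summable (fun i : ℕ => ‖-(a * q ^ i)‖) := by
    simp only [norm_neg, norm_mul, norm_pow]
    exact (summable_geometric_of_lt_one (norm_nonneg _) hq1).mul_left _
  have := tprod_one_add_ne_zero_of_summable (f := fun i : ℕ => -(a * q ^ i))
    (by simpa [sub_eq_add_neg] using h) this
  simpa [sub_eq_add_neg, qPochInf] using this


noncomputable def gR (q b d u : ℂ) (k : ℕ) : ℂ :=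
  (1 - b * q ^ k) * (u - q ^ k) * (1 - d * q ^ k) /
    ((1 - q ^ (k + 1) / b) * (1 - q ^ (k + 1) * u) * (1 - q ^ (k + 1) / d)) * (q / (b * d))

noncomputable def gM (q b d u : ℂ) (y : ℕ) : ℂ :=
  if y = 0 then 1 else (∏ k ∈ range y, gR q b d u k) * (1 + q ^ y)

theorem vRat_eq_gR {q b c d : ℂ} (hc : c ≠ 0) (k : ℕ) : vRat q b c d k = gR q b d c⁻¹ k := by
  unfold vRat gR
  rw [show c⁻¹ - q ^ k = (1 - c * q ^ k) / c by field_simp, ← div_eq_mul_inv]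
  simp only [div_eq_mul_inv, mul_inv]
  ring

theorem vM_eq_gM {q b c d : ℂ} (hc : c ≠ 0) (k : ℕ) : vM q b c d k = gM q b d c⁻¹ k := by
  unfold vM gM vW
  simp_rw [vRat_eq_gR hc]

theorem gM_cont (q b d : ℂ) (y : ℕ) : ContinuousAt (fun u => gM q b d u y) 0 := by
  unfold gM
  split_ifs
  · fun_prop
  · refine ContinuousAt.mul ?_ continuousAt_const
    refine tendsto_finsetProd _ (fun k _ => ?_)
    unfold gR
    refine ContinuousAt.mul ?_ continuousAt_const
    by_cases h : (1 - q ^ (k + 1) / b) * (1 - q ^ (k + 1) / d) = 0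
    · have : (fun u => (1 - b * q ^ k) * (u - q ^ k) * (1 - d * q ^ k) /
          ((1 - q ^ (k + 1) / b) * (1 - q ^ (k + 1) * u) * (1 - q ^ (k + 1) / d))) = fun u => 0 := by
        ext u
        rw [mul_right_comm (1 - q ^ (k + 1) / b), h]; simp
      rw [this]; exact continuousAt_const
    · refine ContinuousAt.div (by fun_prop) (by fun_prop) ?_
      simpa using h

theorem gM_bound {q : ℂ} (hq0 : q ≠ 0) (hq1 : ‖q‖ < 1) (b d : ℂ) : ∃ B : ℕ → ℝ, Summable B ∧
    ∀ᶠ u in 𝓝 (0:ℂ), ∀ y, ‖gM q b d u y‖ ≤ B y := by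
  set u0 : ℝ := min (1/2) (1 / (4 * (‖q / (b * d)‖ + 1))) with hu0
  have hu0p : 0 < u0 := by positivity
  have hu02 : u0 ≤ 1/2 := min_le_left _ _
  have hu03 : u0 * 2 * ‖q / (b * d)‖ ≤ 1 / 2 := by
    have h1 : u0 ≤ 1 / (4 * (‖q / (b * d)‖ + 1)) := min_le_right _ _
    rw [le_div_iff₀ (by positivity)] at h1
    nlinarith [norm_nonneg (q / (b * d))]
  set R : ℕ → ℝ := fun k => ‖(1 - b * q ^ k) * (1 - d * q ^ k) /
    ((1 - q ^ (k + 1) / b) * (1 - q ^ (k + 1) / d))‖ * ((u0 + ‖q ^ k‖) * 2 * ‖q / (b * d)‖) with hR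
  have R0 : ∀ k, 0 ≤ R k := fun k => by positivity
  have Rt : Tendsto R atTop (𝓝 (u0 * 2 * ‖q / (b * d)‖)) := by
    have hqt : Tendsto (fun N : ℕ => q ^ N) atTop (𝓝 0) := tendsto_pow_atTop_nhds_zero_of_norm_lt_one hq1
    have hqt' : Tendsto (fun N : ℕ => q ^ (N + 1)) atTop (𝓝 0) := hqt.comp (tendsto_add_atTop_nat 1)
    have := ((((hqt.const_mul b).const_sub 1).mul
      ((hqt.const_mul d).const_sub 1)).div (((hqt'.div_const b).const_sub 1).mul
       ((hqt'.div_const d).const_sub 1)) (by simp)).norm.mul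
       (((hqt.norm.const_add u0).mul_const 2).mul_const ‖q / (b * d)‖)
    simpa [hR] using this
  have RS : Summable (fun y => ∏ k ∈ range y, R k) := by
    refine summable_of_ratio_norm_eventually_le (r := 3/4) (by norm_num) ?_
    filter_upwards [Rt.eventually (gt_mem_nhds (lt_of_le_of_lt hu03 (by norm_num : (1/2:ℝ) < 3/4)))] with y hy
    rw [prod_range_succ, norm_mul, mul_comm]
    gcongr
    rw [Real.norm_of_nonneg (R0 y)]; exact hy.le
  refine ⟨fun y => 2 * ∏ k ∈ range y, R k, RS.mul_left 2, ?_⟩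
  have : ∀ᶠ u in 𝓝 (0:ℂ), ‖u‖ < u0 := by
    have := (continuous_norm (E := ℂ)).tendsto 0
    rw [norm_zero] at this
    exact this.eventually (gt_mem_nhds hu0p)
  filter_upwards [this] with u hu y
  have hW : ‖∏ k ∈ range y, gR q b d u k‖ ≤ ∏ k ∈ range y, R k := by
    rw [norm_prod]
    refine prod_le_prod (fun _ _ => norm_nonneg _) (fun k _ => ?_)
    have e : gR q b d u k = ((1 - b * q ^ k) * (1 - d * q ^ k) /
       ((1 - q ^ (k + 1) / b) * (1 - q ^ (k + 1) / d))) * ((u - q ^ k) * (1 - q ^ (k + 1) * u)⁻¹ * (q / (b * d))) := by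
      unfold gR
      simp only [div_eq_mul_inv, mul_inv]
      ring
    rw [e, norm_mul, norm_mul _ (q / (b * d)), norm_mul (u - q ^ k)]
    have h1 : ‖u - q ^ k‖ ≤ u0 + ‖q ^ k‖ := (norm_sub_le _ _).trans (by gcongr)
    have h2 : ‖(1 - q ^ (k + 1) * u)⁻¹‖ ≤ 2 := by
      have h3 : ‖q ^ (k + 1) * u‖ ≤ 1 / 2 := by
        rw [norm_mul, norm_pow]
        calc _ ≤ 1 * u0 := by
              gcongr
              exact pow_le_one₀ (norm_nonneg _) hq1.le
          _ ≤ _ := by linarith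
      have h4 : 1 / 2 ≤ ‖1 - q ^ (k + 1) * u‖ := by
        have := norm_sub_norm_le (1:ℂ) (q ^ (k + 1) * u)
        rw [norm_one] at this
        linarith
      rw [norm_inv]
      calc _ ≤ (1/2 : ℝ)⁻¹ := by gcongr
        _ = 2 := by norm_num
    simp only [hR]
    gcongr
  unfold gM
  split_ifs with h
  · subst h; simp
  · rw [norm_mul, mul_comm]
    gcongr
    calc ‖1 + q ^ y‖ ≤ ‖(1:ℂ)‖ + ‖q ^ y‖ := norm_add_le _ _
      _ ≤ 1 + 1 := by
        rw [norm_one, norm_pow]; gcongr; exact pow_le_one₀ (norm_nonneg _) hq1.le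
      _ = 2 := by norm_num

theorem vS_tendsto {q b c d : ℂ} (hq0 : q ≠ 0) (hq1 : ‖q‖ < 1) (hc : c ≠ 0) :
    Tendsto (fun N : ℕ => vS q b (c / q ^ N) d) atTop (𝓝 (∑' y, gM q b d 0 y)) := by
  obtain ⟨B, hB, hb⟩ := gM_bound hq0 hq1 b d
  have hqt : Tendsto (fun N : ℕ => q ^ N / c) atTop (𝓝 0) := by
    simpa using (tendsto_pow_atTop_nhds_zero_of_norm_lt_one hq1).div_const c
  have h := tendsto_tsum_of_dominated_convergence (f := fun N y => gM q b d (q ^ N / c) y) hB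
    (fun y => ((gM_cont q b d y).tendsto).comp hqt) (hqt.eventually hb)
  refine h.congr (fun N => ?_)
  unfold vS
  congr 1; ext y
  rw [vM_eq_gM (div_ne_zero hc (pow_ne_zero _ hq0)), inv_div]

theorem ND_div {q c : ℂ} (hq : q ≠ 0) (hc : ND q c) (N : ℕ) : ND q (c / q ^ N) := by
  refine ⟨div_ne_zero hc.1 (pow_ne_zero _ hq), fun k => ?_⟩
  have := hc.2 (k + N)
  convert this using 2
  have := hc.1
  field_simp
  ring

theorem vS_chain {q b c d : ℂ} (hq : q ≠ 0) (hq1 : ‖q‖ < 1) (hb : ND q b) (hc : ND q c) (hd : ND q d)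
    (H : ∀ N : ℕ, Summable (fun y => vW q b (c / q ^ (N + 1)) d y * (q ^ y)⁻¹)) (N : ℕ) :
    qPoch (q / (b * c * d)) q N * qPoch (q / c) q N * vS q b c d =
      qPoch (q / (b * c)) q N * qPoch (q / (c * d)) q N * vS q b (c / q ^ N) d := by
  have b0 := hb.1
  have c0 := hc.1
  have d0 := hd.1
  induction N with
  | zero => simp [qPoch]
  | succ N ih =>
    have hz : q ^ (N + 1) ≠ 0 := pow_ne_zero _ hq
    have hz' : q ^ N ≠ 0 := pow_ne_zero _ hq
    have hc1 : c / q ^ (N + 1) ≠ 1 := by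
      intro h
      apply hc.2 N
      rw [div_eq_one_iff_eq hz] at h
      rw [← h, div_self c0, sub_self]
    have r := vS_rec hq hq1 hb (ND_div hq hc (N + 1)) hd hc1 (H N)
    rw [show c / q ^ (N + 1) * q = c / q ^ N by field_simp; ring] at r
    have r2 : (1 - q / (b * c * d) * q ^ N) * (1 - q / c * q ^ N) * vS q b (c / q ^ N) d =
       (1 - q / (b * c) * q ^ N) * (1 - q / (c * d) * q ^ N) * vS q b (c / q ^ (N + 1)) d := by
      have e1 : (1 - q / (b * c * d) * q ^ N) = -(q ^ (N + 1) / (b * c * d)) * (1 - b * (c / q ^ (N + 1)) * d) := by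
        rw [pow_succ]; field_simp; ring
      have e2 : (1 - q / c * q ^ N) = -(q ^ (N + 1) / c) * (1 - c / q ^ (N + 1)) := by
        rw [pow_succ]; field_simp; ring
      have e3 : (1 - q / (b * c) * q ^ N) = -(q ^ (N + 1) / (b * c)) * (1 - b * (c / q ^ (N + 1))) := by
        rw [pow_succ]; field_simp; ring
      have e4 : (1 - q / (c * d) * q ^ N) = -(q ^ (N + 1) / (c * d)) * (1 - c / q ^ (N + 1) * d) := by
        rw [pow_succ]; field_simp; ring
      rw [e1, e2, e3, e4]
      have e5 : q ^ (N + 1) / (b * c * d) * (q ^ (N + 1) / c) = q ^ (N + 1) / (b * c) * (q ^ (N + 1) / (c * d)) := by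
        field_simp
      linear_combination (q ^ (N + 1) / (b * c * d) * (q ^ (N + 1) / c)) * r + (1 - b * (c / q ^ (N + 1))) * (1 - c / q ^ (N + 1) * d) * vS q b (c / q ^ (N + 1)) d * e5
    have hp : ∀ a, qPoch a q (N + 1) = qPoch a q N * (1 - a * q ^ N) := fun a => by
      simp [qPoch, prod_range_succ]
    simp only [hp]
    linear_combination (1 - q / (b * c * d) * q ^ N) * (1 - q / c * q ^ N) * ih +
      qPoch (q / (b * c)) q N * qPoch (q / (c * d)) q N * r2

theorem vS_lim {q b c d : ℂ} (hq : q ≠ 0) (hq1 : ‖q‖ < 1) (hb : ND q b) (hc : ND q c) (hd : ND q d)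
    (H : ∀ N : ℕ, Summable (fun y => vW q b (c / q ^ (N + 1)) d y * (q ^ y)⁻¹)) :
    qPochInf (q / (b * c * d)) q * qPochInf (q / c) q * vS q b c d =
      qPochInf (q / (b * c)) q * qPochInf (q / (c * d)) q * ∑' y, gM q b d 0 y := by
  have h1 := ((qInf_tendsto hq1 (q / (b * c * d))).mul (qInf_tendsto hq1 (q / c))).mul_const (vS q b c d)
  have h2 := ((qInf_tendsto hq1 (q / (b * c))).mul (qInf_tendsto hq1 (q / (c * d)))).mul
    (vS_tendsto (b := b) (d := d) hq hq1 hc.1)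
  exact tendsto_nhds_unique h1 (h2.congr (fun N => (vS_chain hq hq1 hb hc hd H N).symm))

theorem pow_ne_one' {q : ℂ} (hq1 : ‖q‖ < 1) (k : ℕ) : 1 - q ^ (k + 1) ≠ 0 := by
  intro h
  have h2 : q ^ (k + 1) = 1 := (sub_eq_zero.1 h).symm
  have h3 : ‖q‖ ^ (k + 1) = 1 := by rw [← norm_pow, h2, norm_one]
  have : ‖q‖ ^ (k + 1) < 1 := pow_lt_one₀ (norm_nonneg _) hq1 (by omega)
  linarith

theorem bailey {q b c d : ℂ} (hq : q ≠ 0) (hq1 : ‖q‖ < 1) (hb : ND q b) (hc : ND q c) (hd : ND q d)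
    (hconv : ‖q / (b * c * d)‖ < 1) :
    qPochInf (q / (b * c * d)) q * qPochInf (q / c) q * qPochInf (q / b) q * qPochInf (q / d) q * vS q b c d =
      qPochInf q q * qPochInf (q / (b * c)) q * qPochInf (q / (b * d)) q * qPochInf (q / (c * d)) q := by
  have b0 := hb.1
  have c0 := hc.1
  have d0 := hd.1
  have A1 := vS_lim hq hq1 hb hc hd (fun N => by
    have := vW_summable (q := q) (b := b) (c := c / q ^ (N + 1)) (d := d) (t := q⁻¹) hq1 (by
      have : q / (b * (c / q ^ (N + 1)) * d) * q⁻¹ = q / (b * c * d) * q ^ N := by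
        field_simp; ring
      rw [this, norm_mul, norm_pow]
      calc _ ≤ ‖q / (b * c * d)‖ * 1 := by
            gcongr
            exact pow_le_one₀ (norm_nonneg _) hq1.le
        _ < 1 := by linarith)
    simpa using this)
  have nd1 : ND q 1 := ⟨one_ne_zero, fun k => by simpa using pow_ne_one' hq1 k⟩
  have A2 := vS_lim hq hq1 hb nd1 hd (fun N => by
    apply summable_of_ne_finset_zero (s := range (N + 2))
    intro y hy
    have hy' : N + 1 < y := by
      have := mem_range.not.1 hy
      omega
    have : vW q b (1 / q ^ (N + 1)) d y = 0 := by
      unfold vW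
      apply prod_eq_zero (mem_range.2 hy')
      unfold vRat
      rw [one_div, inv_mul_cancel₀ (pow_ne_zero _ hq)]
      simp
    rw [this, zero_mul])
  have A3 : vS q b 1 d = 1 := by
    unfold vS
    rw [tsum_eq_single 0, vM_zero]
    intro y hy
    unfold vM
    rw [if_neg hy]
    have : vW q b 1 d y = 0 := by
      unfold vW
      apply prod_eq_zero (mem_range.2 (Nat.pos_of_ne_zero hy))
      unfold vRat
      simp
    rw [this, zero_mul]
  rw [A3] at A2
  simp only [mul_one, div_one, one_mul] at A2
  linear_combination qPochInf (q / b) q * qPochInf (q / d) q * A1 -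
    qPochInf (q / (b * c)) q * qPochInf (q / (c * d)) q * A2



theorem det_left {n : ℕ} (Λ : ℂ[X] →ₗ[ℂ] ℂ) (f g : Fin n → ℂ[X])
    (hf : ∀ i, (f i).natDegree ≤ (i : ℕ)) :
    (Matrix.of (fun i j : Fin n => Λ (f i * g j))).det =
      (∏ i : Fin n, (f i).coeff i) * (Matrix.of (fun i j : Fin n => Λ (X ^ (i : ℕ) * g j))).det := by
  have h : Matrix.of (fun i j : Fin n => Λ (f i * g j)) =
      (Matrix.of (fun i k : Fin n => (f i).coeff k)) * (Matrix.of (fun i j : Fin n => Λ (X ^ (i : ℕ) * g j))) := by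
    ext i j
    simp only [Matrix.mul_apply, Matrix.of_apply]
    have h1 : f i = ∑ k : Fin n, (f i).coeff k • (X : ℂ[X]) ^ (k : ℕ) := by
      rw [Fin.sum_univ_eq_sum_range (fun k => (f i).coeff k • (X : ℂ[X]) ^ k) n]
      conv_lhs => rw [(f i).as_sum_range' n (lt_of_le_of_lt (hf i) i.2)]
      refine sum_congr rfl (fun k _ => ?_)
      rw [← C_mul_X_pow_eq_monomial, smul_eq_C_mul]
    conv_lhs => rw [h1]
    rw [sum_mul, map_sum]
    refine sum_congr rfl (fun k _ => ?_)
    rw [smul_mul_assoc, map_smul, smul_eq_mul]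
  rw [h, Matrix.det_mul]
  congr 1
  rw [Matrix.det_of_isLowerTriangular]
  · simp
  · intro i k hik
    simp only [Matrix.of_apply]
    apply coeff_eq_zero_of_natDegree_lt
    exact lt_of_le_of_lt (hf i) hik

theorem det_both {n : ℕ} (Λ : ℂ[X] →ₗ[ℂ] ℂ) (f g : Fin n → ℂ[X])
    (hf : ∀ i, (f i).natDegree ≤ (i : ℕ)) (hg : ∀ i, (g i).natDegree ≤ (i : ℕ)) :
    (Matrix.of (fun i j : Fin n => Λ (f i * g j))).det =
      (∏ i : Fin n, (f i).coeff i) * (∏ i : Fin n, (g i).coeff i) *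
      (Matrix.of (fun i j : Fin n => Λ (X ^ (i : ℕ) * X ^ (j : ℕ)))).det := by
  rw [det_left Λ f g hf, mul_assoc]
  congr 1
  rw [← Matrix.det_transpose]
  have := det_left Λ g (fun i : Fin n => X ^ (i : ℕ)) hg
  convert this using 2
  ext i j; simp [mul_comm]

noncomputable def Pc : ℕ → ℂ[X]
  | 0 => 1
  | 1 => X - 1
  | (r + 2) => X * Pc (r + 1) - Pc r

theorem Pc_deg : ∀ r, (Pc r).natDegree ≤ r ∧ (Pc r).coeff r = 1
  | 0 => by simp [Pc]
  | 1 => by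
    constructor
    · simp only [Pc]
      compute_degree
    · simp [Pc, coeff_one]
  | (r + 2) => by
    obtain ⟨h1, h2⟩ := Pc_deg (r + 1)
    obtain ⟨h3, h4⟩ := Pc_deg r
    constructor
    · simp only [Pc]
      refine (natDegree_sub_le _ _).trans (max_le ?_ (by omega))
      refine natDegree_mul_le.trans ?_
      rw [natDegree_X]; omega
    · simp only [Pc]
      rw [coeff_sub, coeff_X_mul, h2, coeff_eq_zero_of_natDegree_lt (by omega), sub_zero]

theorem Pc_eval {z : ℂ} (hz : z ≠ 0) : ∀ r : ℕ,
    (1 + z) * (Pc r).eval (z + z⁻¹) = (z ^ r)⁻¹ + z ^ (r + 1)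
  | 0 => by simp [Pc]
  | 1 => by simp [Pc]; field_simp; ring
  | (r + 2) => by
    have h1 := Pc_eval hz (r + 1)
    have h2 := Pc_eval hz r
    simp only [Pc, eval_sub, eval_mul, eval_X]
    have : (1 + z) * ((z + z⁻¹) * eval (z + z⁻¹) (Pc (r + 1)) - eval (z + z⁻¹) (Pc r)) =
      (z + z⁻¹) * ((z ^ (r + 1))⁻¹ + z ^ (r + 1 + 1)) - ((z ^ r)⁻¹ + z ^ (r + 1)) := by
      linear_combination (z + z⁻¹) * h1 - h2
    rw [this]
    field_simp
    ring

theorem Pc_two (r : ℕ) : (Pc r).eval (1 + 1) = 1 := by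
  have := Pc_eval (z := 1) one_ne_zero r
  simp only [inv_one, one_pow] at this
  have h2 : (1 + 1 : ℂ) ≠ 0 := by norm_num
  exact mul_left_cancel₀ h2 (by rw [this]; ring)

noncomputable def phi (q c : ℂ) (r : ℕ) : ℂ[X] :=
  ∏ k ∈ range r, (C (1 + (c * q ^ k) ^ 2) - C (c * q ^ k) * X)

theorem phi_deg (q c : ℂ) (r : ℕ) : (phi q c r).natDegree ≤ r ∧
    (phi q c r).coeff r = ∏ k ∈ range r, (-(c * q ^ k)) := by
  have hd : ∀ k : ℕ, (C (1 + (c * q ^ k) ^ 2) - C (c * q ^ k) * X : ℂ[X]).natDegree ≤ 1 := by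
    intro k; compute_degree
  constructor
  · refine (natDegree_prod_le _ _).trans ?_
    refine (sum_le_sum (fun k _ => hd k)).trans (by simp)
  · have := coeff_prod_of_natDegree_le (range r) (fun k => (C (1 + (c * q ^ k) ^ 2) - C (c * q ^ k) * X : ℂ[X])) 1 (fun k _ => hd k)
    rw [card_range, mul_one] at this
    unfold phi
    rw [this]
    refine prod_congr rfl (fun k _ => ?_)
    rw [coeff_sub, coeff_C_mul, coeff_X_one, coeff_C]; simp

noncomputable def hp (q A B : ℂ) (N j : ℕ) : ℂ[X] :=
  (∏ k ∈ range j, (1 - C (A * q ^ k) * X)) * ∏ k ∈ Ico j N, (1 - C (B * q ^ k) * X)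

theorem hp_deg (q A B : ℂ) {N j : ℕ} (hj : j ≤ N) : (hp q A B N j).natDegree ≤ N := by
  have hd : ∀ a : ℂ, (1 - C a * X : ℂ[X]).natDegree ≤ 1 := by
    intro k; compute_degree
  unfold hp
  refine natDegree_mul_le.trans ?_
  have h1 := (natDegree_prod_le (range j) (fun k => (1 - C (A * q ^ k) * X : ℂ[X]))).trans (sum_le_sum (fun k _ => hd _))
  have h2 := (natDegree_prod_le (Ico j N) (fun k => (1 - C (B * q ^ k) * X : ℂ[X]))).trans (sum_le_sum (fun k _ => hd _))
  simp only [sum_const, card_range, Nat.card_Ico, smul_eq_mul, mul_one] at h1 h2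
  omega

theorem hp_coeff_zero (q A B : ℂ) (N j : ℕ) : (hp q A B N j).coeff 0 = 1 := by
  rw [coeff_zero_eq_eval_zero]
  simp [hp, eval_prod]

theorem hp_step (q A B : ℂ) {N j : ℕ} (hj : j ≤ N) :
    hp q A B (N + 1) (j + 1) = X * (C ((B - A) * q ^ j) * hp q A (B * q) N j) + hp q A B (N + 1) j := by
  unfold hp
  rw [prod_range_succ, prod_eq_prod_Ico_succ_bot (show j < N + 1 by omega)]
  have : ∏ k ∈ Ico (j + 1) (N + 1), (1 - C (B * q ^ k) * X : ℂ[X]) =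
      ∏ k ∈ Ico j N, (1 - C (B * q * q ^ k) * X) := by
    rw [← prod_Ico_add' (fun k => (1 - C (B * q ^ k) * X : ℂ[X])) j N 1]
    refine prod_congr rfl (fun k _ => ?_)
    rw [pow_succ]; congr 3; ring
  rw [this]
  simp only [C_mul, C_sub]
  ring

theorem hp_det (q A : ℂ) (N : ℕ) : ∀ B : ℂ,
    (Matrix.of (fun l j : Fin (N + 1) => (hp q A B N j).coeff l)).det =
      ∏ r ∈ range (N + 1), ∏ k ∈ range r, ((B * q ^ k - A) * q ^ k) := by
  induction N with
  | zero => intro B; simp [hp]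
  | succ N ih =>
    intro B
    set M' : Matrix (Fin (N + 2)) (Fin (N + 2)) ℂ := Matrix.of (fun l j : Fin (N + 2) =>
      (Fin.cases (hp q A B (N + 1) 0) (fun j : Fin (N + 1) => X * (C ((B - A) * q ^ (j : ℕ)) * hp q A (B * q) N j)) j : ℂ[X]).coeff l) with hM'
    have h1 : (Matrix.of (fun l j : Fin (N + 1 + 1) => (hp q A B (N + 1) j).coeff l)).det = M'.det := by
      refine Matrix.det_eq_of_forall_col_eq_smul_add_pred (fun _ => 1) ?_ ?_
      · intro i; simp [hM']
      · intro i j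
        simp only [hM', Matrix.of_apply, Fin.val_succ, Fin.cases_succ, Fin.val_castSucc, one_mul]
        rw [hp_step q A B (Nat.lt_succ_iff.1 j.2), coeff_add]
    rw [h1, Matrix.det_succ_row_zero, Fin.sum_univ_succ, sum_eq_zero, add_zero]
    · have h2 : M'.submatrix Fin.succ (Fin.succAbove 0) =
         Matrix.of (fun l j : Fin (N + 1) => ((B - A) * q ^ (j : ℕ)) * (Matrix.of (fun l j : Fin (N + 1) => (hp q A (B * q) N j).coeff l)) l j) := by
        ext l j
        simp only [hM', Matrix.submatrix_apply, Matrix.of_apply, Fin.succAbove_zero, Fin.cases_succ, Fin.val_succ]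
        rw [coeff_X_mul, coeff_C_mul]
      rw [h2, Matrix.det_mul_row, ih]
      have h3 : M' 0 0 = 1 := by
        simp only [hM', Matrix.of_apply, Fin.cases_zero]
        exact hp_coeff_zero _ _ _ _ _
      rw [h3]
      rw [prod_range_succ' _ (N + 1)]
      rw [Fin.prod_univ_eq_prod_range (fun j => (B - A) * q ^ j) (N + 1), ← prod_mul_distrib]
      simp only [Fin.val_zero, pow_zero, one_mul, range_zero, prod_empty, mul_one]
      refine prod_congr rfl (fun r _ => ?_)
      rw [prod_range_succ' _ r]
      simp only [prod_mul_distrib, pow_zero, mul_one]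
      have : ∏ k ∈ range r, q ^ (k + 1) = q ^ r * ∏ k ∈ range r, q ^ k := by
        simp only [pow_succ, prod_mul_distrib, prod_const, card_range]; ring
      rw [this]
      have : ∏ k ∈ range r, (B * q * q ^ k - A) = ∏ k ∈ range r, (B * q ^ (k + 1) - A) :=
        prod_congr rfl (fun k _ => by rw [pow_succ]; ring)
      rw [this]; ring
    · intro j _
      have : M' 0 j.succ = 0 := by simp [hM']
      rw [this]; ring

theorem hankel {q A B : ℂ} (N : ℕ) (hB : ∀ k : ℕ, 1 - B * q ^ k ≠ 0) :
    (Matrix.of (fun i j : Fin (N + 1) => qPoch A q (i + j) / qPoch B q (i + j))).det =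
      (∏ i ∈ range (N + 1), qPoch A q i / qPoch B q (i + N)) *
      (Matrix.vandermonde (fun i : Fin (N + 1) => q ^ (i : ℕ))).det *
      ∏ r ∈ range (N + 1), ∏ k ∈ range r, ((B * q ^ k - A) * q ^ k) := by
  have hB' : ∀ k, qPoch B q k ≠ 0 := fun k => prod_ne_zero_iff.2 (fun i _ => hB i)
  have h1 : Matrix.of (fun i j : Fin (N + 1) => qPoch A q (i + j) / qPoch B q (i + j)) =
     Matrix.of (fun i j : Fin (N + 1) => (qPoch A q i / qPoch B q (i + N)) *
       (Matrix.vandermonde (fun i : Fin (N + 1) => q ^ (i : ℕ)) *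
        Matrix.of (fun l j : Fin (N + 1) => (hp q A B N j).coeff l)) i j) := by
    ext i j
    simp only [Matrix.mul_apply, Matrix.of_apply, Matrix.vandermonde_apply]
    have hj : (j : ℕ) ≤ N := Nat.lt_succ_iff.1 j.2
    have e : ∑ l : Fin (N + 1), (q ^ (i : ℕ)) ^ (l : ℕ) * (hp q A B N j).coeff l = (hp q A B N j).eval (q ^ (i : ℕ)) := by
      rw [eval_eq_sum_range' (n := N + 1) (Nat.lt_succ_iff.2 (hp_deg q A B hj)), Fin.sum_univ_eq_sum_range (fun l => (q ^ (i : ℕ)) ^ l * (hp q A B N j).coeff l)]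
      exact sum_congr rfl (fun _ _ => mul_comm _ _)
    rw [e]
    have e2 : (hp q A B N j).eval (q ^ (i : ℕ)) = (∏ k ∈ range j, (1 - A * q ^ (i + k : ℕ))) * ∏ k ∈ Ico (j : ℕ) N, (1 - B * q ^ (i + k : ℕ)) := by
      simp only [hp, eval_mul, eval_prod, eval_sub, eval_one, eval_C, eval_X]
      congr 1 <;> refine prod_congr rfl (fun k _ => ?_) <;> rw [pow_add] <;> ring
    have e3 : qPoch A q (i + j) = qPoch A q i * ∏ k ∈ range j, (1 - A * q ^ (i + k : ℕ)) := by
      simp only [qPoch]; rw [prod_range_add]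
    have e4 : qPoch B q (i + N) = qPoch B q (i + j) * ∏ k ∈ Ico (j : ℕ) N, (1 - B * q ^ (i + k : ℕ)) := by
      simp only [qPoch]; rw [prod_range_add, prod_range_add, mul_assoc, prod_range_mul_prod_Ico _ hj]
    have h5 := hB' (i + j)
    have h6 := hB' (i + N)
    rw [e2, e3, div_mul_eq_mul_div, div_eq_div_iff h5 h6, e4]
    ring
  rw [h1, Matrix.det_mul_column, Matrix.det_mul, hp_det, ← mul_assoc]
  rw [Fin.prod_univ_eq_prod_range (fun i => qPoch A q i / qPoch B q (i + N))]



def NP (q t : ℂ) : Prop := t ≠ 0 ∧ ∀ m : ℤ, t ≠ q ^ m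

theorem NP.nd {q t : ℂ} (h : NP q t) : ND q t := by
  refine ⟨h.1, fun k hk => ?_⟩
  have h1 := h.1
  apply h.2 ((k + 1 : ℕ) : ℤ)
  rw [zpow_natCast]
  rw [sub_eq_zero, eq_div_iff h1, one_mul] at hk
  exact hk

theorem NP.mul {q t : ℂ} (hq : q ≠ 0) (h : NP q t) (k : ℤ) : NP q (t * q ^ k) := by
  refine ⟨mul_ne_zero h.1 (zpow_ne_zero _ hq), fun m hm => h.2 (m - k) ?_⟩
  rw [zpow_sub₀ hq, ← hm, mul_div_assoc, div_self (zpow_ne_zero _ hq), mul_one]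

theorem NP.mul_nat {q t : ℂ} (hq : q ≠ 0) (h : NP q t) (k : ℕ) : NP q (t * q ^ k) := by
  simpa using h.mul hq (k : ℤ)

theorem NP.one_sub {q t : ℂ} (hq : q ≠ 0) (h : NP q t) (k : ℕ) : 1 - t * q ^ k ≠ 0 := by
  intro hk
  apply h.2 (-(k : ℤ))
  rw [zpow_neg, zpow_natCast]
  exact eq_inv_of_mul_eq_one_left (sub_eq_zero.1 hk).symm

theorem NP.qPoch {q t : ℂ} (hq : q ≠ 0) (h : NP q t) (k : ℕ) : qPoch t q k ≠ 0 :=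
  prod_ne_zero_iff.2 (fun i _ => h.one_sub hq i)

theorem NP.ne_one {q t : ℂ} (h : NP q t) : t ≠ 1 := by
  simpa using h.2 0

theorem qPoch_succ (a q : ℂ) (N : ℕ) : qPoch a q (N + 1) = qPoch a q N * (1 - a * q ^ N) := by
  simp [qPoch, prod_range_succ]

theorem qPoch_add (a q : ℂ) (N M : ℕ) : qPoch a q (N + M) = qPoch a q N * qPoch (a * q ^ N) q M := by
  simp only [qPoch]
  rw [prod_range_add]
  congr 1
  exact prod_congr rfl (fun i _ => by rw [pow_add]; ring)

theorem vS_shift {q b c d : ℂ} (hq : q ≠ 0) (hq1 : ‖q‖ < 1) (hb : NP q b) (hc : NP q c) (hd : NP q d)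
    (i : ℕ) (hconv : ‖q / (b * c * d)‖ < ‖q‖ ^ i) :
    qPoch c q i * qPoch (b * c * d) q i * vS q b (c * q ^ i) d =
      qPoch (b * c) q i * qPoch (c * d) q i * vS q b c d := by
  induction i with
  | zero => simp [qPoch]
  | succ i ih =>
    have hq0 : 0 < ‖q‖ := norm_pos_iff.2 hq
    have ih' := ih (hconv.trans_le (pow_le_pow_of_le_one hq0.le hq1.le (Nat.le_succ i)))
    have b0 := hb.1
    have c0 := hc.1
    have d0 := hd.1
    have r := vS_rec hq hq1 hb.nd (hc.mul_nat hq i).nd hd.nd (hc.mul_nat hq i).ne_one (by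
      have := vW_summable (q := q) (b := b) (c := c * q ^ i) (d := d) (t := q⁻¹) hq1 (by
        have e : q / (b * (c * q ^ i) * d) * q⁻¹ = q / (b * c * d) / q ^ (i + 1) := by
          field_simp
          ring
        rw [e, norm_div, norm_pow, div_lt_one (by positivity)]
        exact hconv)
      simpa using this)
    rw [mul_assoc c, ← pow_succ] at r
    simp only [qPoch_succ]
    linear_combination qPoch c q i * qPoch (b * c * d) q i * r + (1 - b * c * q ^ i) * (1 - c * d * q ^ i) * ih'

theorem vM_swap (q b c d : ℂ) (y : ℕ) : vM q b c d y = vM q b d c y := by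
  unfold vM; rw [vW_swap q b c d]

theorem phi_eval {q : ℂ} (hq : q ≠ 0) (c : ℂ) (r y : ℕ) : (phi q c r).eval (q ^ y + (q ^ y)⁻¹) =
    ∏ k ∈ range r, ((1 - c * q ^ k * q ^ y) * (1 - c * q ^ k / q ^ y)) := by
  simp only [phi, eval_prod, eval_sub, eval_mul, eval_C, eval_X]
  refine prod_congr rfl (fun k _ => ?_)
  have : q ^ y ≠ 0 := pow_ne_zero _ hq
  field_simp
  ring

theorem vM_phi' {q b c d : ℂ} (hq : q ≠ 0) (hb : NP q b) (hc : NP q c) (hd : NP q d) (r y : ℕ) :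
    vM q b c d y * (phi q c r).eval (q ^ y + (q ^ y)⁻¹) = qPoch c q r ^ 2 * vM q b (c * q ^ r) d y := by
  rw [phi_eval hq]
  induction r with
  | zero => simp [qPoch]
  | succ r ih =>
    rw [prod_range_succ, ← mul_assoc, ih, qPoch_succ]
    have := vM_phi hq hb.nd (hc.mul_nat hq r).nd hd.nd (ND_mul hq (hc.mul_nat hq r).nd (hc.mul_nat hq r).ne_one) y
    rw [mul_assoc c, ← pow_succ] at this
    linear_combination -qPoch c q r ^ 2 * this

theorem entry {q b c d : ℂ} (hq : q ≠ 0) (hq1 : ‖q‖ < 1) (hb : NP q b) (hc : NP q c) (hd : NP q d)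
    (hbcd : NP q (b * c * d)) (i j : ℕ) (hconv : ‖q / (b * c * d)‖ < ‖q‖ ^ (i + j)) :
    ∑' y, vM q b c d y * (phi q c i * phi q d j).eval (q ^ y + (q ^ y)⁻¹) =
      (qPoch c q i * qPoch (b * c) q i) * ((qPoch d q j * qPoch (b * d) q j) *
        (qPoch (c * d) q (i + j) / qPoch (b * c * d) q (i + j))) * vS q b c d := by
  have hq0 : 0 < ‖q‖ := norm_pos_iff.2 hq
  have e1 : ∀ y, vM q b c d y * (phi q c i * phi q d j).eval (q ^ y + (q ^ y)⁻¹) =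
     qPoch c q i ^ 2 * qPoch d q j ^ 2 * vM q b (c * q ^ i) (d * q ^ j) y := by
    intro y
    rw [eval_mul, ← mul_assoc, vM_phi' hq hb hc hd, vM_swap, mul_assoc, vM_phi' hq hb hd (hc.mul_nat hq i), vM_swap]
    ring
  simp_rw [e1]
  rw [tsum_mul_left]
  change _ * vS q b (c * q ^ i) (d * q ^ j) = _
  have s1 := vS_shift hq hq1 hb hc hd i (hconv.trans_le (pow_le_pow_of_le_one hq0.le hq1.le (by omega)))
  have s2 := vS_shift hq hq1 hb hd (hc.mul_nat hq i) j (by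
    have e : q / (b * d * (c * q ^ i)) = q / (b * c * d) / q ^ i := by
      have b0 := hb.1
      have c0 := hc.1
      have d0 := hd.1
      field_simp
    rw [e, norm_div, norm_pow, div_lt_iff₀ (by positivity), ← pow_add, add_comm]
    exact hconv)
  rw [vS_swap, vS_swap q b d] at s2
  rw [qPoch_add, qPoch_add]
  have n1 := hc.qPoch hq i
  have n2 := hd.qPoch hq j
  have n3 := hbcd.qPoch hq i
  have n4 := (hbcd.mul_nat hq i).qPoch hq j
  rw [show b * d * (c * q ^ i) = b * c * d * q ^ i by ring, show d * (c * q ^ i) = c * d * q ^ i by ring] at s2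
  generalize vS q b (c * q ^ i) (d * q ^ j) = S1 at *
  generalize vS q b (c * q ^ i) d = S2 at *
  generalize vS q b c d = S3 at *
  generalize qPoch (b * c * d * q ^ i) q j = x1 at *
  generalize qPoch (b * c * d) q i = x2 at *
  generalize qPoch (c * d * q ^ i) q j = x3 at *
  generalize qPoch (c * d) q i = x4 at *
  generalize qPoch (b * c) q i = x5 at *
  generalize qPoch (b * d) q j = x6 at *
  generalize qPoch c q i = x7 at *
  generalize qPoch d q j = x8 at *
  rw [mul_div_assoc', mul_div_assoc', div_mul_eq_mul_div, eq_div_iff (mul_ne_zero n3 n4)]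
  linear_combination x7 * x8 * (x7 * x2 * s2 + x6 * x3 * s1)



noncomputable def mom (q b c d : ℂ) (k : ℕ) : ℂ := ∑' y, vM q b c d y * (q ^ y + (q ^ y)⁻¹) ^ k

noncomputable def Lam (q b c d : ℂ) : ℂ[X] →ₗ[ℂ] ℂ :=
  Polynomial.lsum (fun k => (LinearMap.id : ℂ →ₗ[ℂ] ℂ).smulRight (mom q b c d k))

theorem mom_summable {q b c d : ℂ} (hq : q ≠ 0) (hq1 : ‖q‖ < 1) (K : ℕ)
    (hconv : ‖q / (b * c * d)‖ < ‖q‖ ^ K) {k : ℕ} (hk : k ≤ K) :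
    Summable (fun y => vM q b c d y * (q ^ y + (q ^ y)⁻¹) ^ k) := by
  have hq0 : 0 < ‖q‖ := norm_pos_iff.2 hq
  refine vM_C_summable hq hq1 K ?_ hk
  apply vW_summable hq1
  rw [norm_mul, norm_inv, norm_pow, ← div_eq_mul_inv, div_lt_one (by positivity)]
  exact hconv

theorem Lam_eq {q b c d : ℂ} (hq : q ≠ 0) (hq1 : ‖q‖ < 1) (K : ℕ)
    (hconv : ‖q / (b * c * d)‖ < ‖q‖ ^ K) (f : ℂ[X]) (hf : f.natDegree ≤ K) :
    Lam q b c d f = ∑' y, vM q b c d y * f.eval (q ^ y + (q ^ y)⁻¹) := by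
  have h1 : Lam q b c d f = ∑ k ∈ range (K + 1), f.coeff k * mom q b c d k := by
    unfold Lam
    rw [Polynomial.lsum_apply, Polynomial.sum_over_range' _ _ (K + 1) (by omega)]
    · simp
    · simp
  rw [h1]
  unfold mom
  simp_rw [← tsum_mul_left]
  rw [← Summable.tsum_finsetSum]
  · congr 1; ext y
    rw [eval_eq_sum_range' (n := K + 1) (by omega), mul_sum]
    exact sum_congr rfl (fun k _ => by ring)
  · intro k hk
    exact (mom_summable hq hq1 K hconv (by have := mem_range.1 hk; omega)).mul_left _

theorem det_main {q b c d : ℂ} (hq : q ≠ 0) (hq1 : ‖q‖ < 1) (hb : NP q b) (hc : NP q c) (hd : NP q d)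
    (hbcd : NP q (b * c * d)) (N : ℕ) (hconv : ‖q / (b * c * d)‖ < ‖q‖ ^ (2 * N)) :
    (Matrix.of (fun i j : Fin (N + 1) => ∑' y, vM q b c d y *
      ((Pc i).eval (q ^ y + (q ^ y)⁻¹) * (q ^ y + (q ^ y)⁻¹) ^ (j : ℕ)))).det *
      (∏ r ∈ range (N + 1), ∏ k ∈ range r, ((c * q ^ k) * (d * q ^ k))) =
    vS q b c d ^ (N + 1) * (∏ r ∈ range (N + 1), (qPoch c q r * qPoch (b * c) q r)) *
     (∏ r ∈ range (N + 1), (qPoch d q r * qPoch (b * d) q r)) *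
     ((∏ i ∈ range (N + 1), qPoch (c * d) q i / qPoch (b * c * d) q (i + N)) *
      (Matrix.vandermonde (fun i : Fin (N + 1) => q ^ (i : ℕ))).det *
      ∏ r ∈ range (N + 1), ∏ k ∈ range r, ((b * c * d * q ^ k - c * d) * q ^ k)) := by
  have hq0 : 0 < ‖q‖ := norm_pos_iff.2 hq
  have dg : ∀ (f g : ℂ[X]) (i j : Fin (N + 1)), f.natDegree ≤ i → g.natDegree ≤ j → (f * g).natDegree ≤ 2 * N := by
    intro f g i j h1 h2
    have := i.2
    have := j.2
    refine natDegree_mul_le.trans ?_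
    omega
  have a1 := det_both (n := N + 1) (Lam q b c d) (fun i => Pc i) (fun j => X ^ (j : ℕ)) (fun i => (Pc_deg i).1)
    (fun i => by simp)
  have a2 := det_both (n := N + 1) (Lam q b c d) (fun i => phi q c i) (fun j => phi q d j)
    (fun i => (phi_deg q c i).1) (fun i => (phi_deg q d i).1)
  have b1 : (Matrix.of (fun i j : Fin (N + 1) => ∑' y, vM q b c d y *
      ((Pc i).eval (q ^ y + (q ^ y)⁻¹) * (q ^ y + (q ^ y)⁻¹) ^ (j : ℕ)))) =
      Matrix.of (fun i j : Fin (N + 1) => Lam q b c d (Pc i * X ^ (j : ℕ))) := by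
    ext i j
    simp only [Matrix.of_apply]
    rw [Lam_eq hq hq1 (2 * N) hconv _ (dg _ _ i j (Pc_deg i).1 (by simp))]
    simp
  have b2 : (Matrix.of (fun i j : Fin (N + 1) => Lam q b c d (phi q c i * phi q d j))) =
      Matrix.of (fun i j : Fin (N + 1) => (qPoch c q i * qPoch (b * c) q i * vS q b c d) *
        (Matrix.of (fun i j : Fin (N + 1) => (qPoch d q j * qPoch (b * d) q j) *
        (Matrix.of (fun i j : Fin (N + 1) => qPoch (c * d) q (i + j) / qPoch (b * c * d) q (i + j))) i j) i j)) := by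
    ext i j
    simp only [Matrix.of_apply]
    rw [Lam_eq hq hq1 (2 * N) hconv _ (dg _ _ i j (phi_deg q c i).1 (phi_deg q d j).1),
      entry hq hq1 hb hc hd hbcd _ _ (hconv.trans_le (pow_le_pow_of_le_one hq0.le hq1.le (by omega)))]
    ring
  rw [b2, Matrix.det_mul_column, Matrix.det_mul_row, hankel N (fun k => hbcd.one_sub hq k)] at a2
  rw [b1, a1]
  simp only [(Pc_deg _).2, (phi_deg _ _ _).2, coeff_X_pow_self, prod_const_one, one_mul] at a2 ⊢
  rw [prod_mul_distrib, prod_const, card_univ, Fintype.card_fin,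
   Fin.prod_univ_eq_prod_range (fun r => qPoch c q r * qPoch (b * c) q r),
   Fin.prod_univ_eq_prod_range (fun r => qPoch d q r * qPoch (b * d) q r),
   Fin.prod_univ_eq_prod_range (fun r => ∏ k ∈ range r, (-(c * q ^ k))),
   Fin.prod_univ_eq_prod_range (fun r => ∏ k ∈ range r, (-(d * q ^ k)))] at a2
  have e : (∏ r ∈ range (N + 1), ∏ k ∈ range r, (c * q ^ k * (d * q ^ k))) =
    (∏ r ∈ range (N + 1), ∏ k ∈ range r, (-(c * q ^ k))) * (∏ r ∈ range (N + 1), ∏ k ∈ range r, (-(d * q ^ k))) := by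
    simp only [← prod_mul_distrib]
    exact prod_congr rfl (fun r _ => prod_congr rfl (fun k _ => by ring))
  rw [e]
  linear_combination -a2



noncomputable def Wz (q b c d : ℂ) (y : ℤ) : ℂ := (q / (b * c * d)) ^ y *
  ((qPochInt b q y * qPochInt c q y * qPochInt d q y) /
    (qPochInt (q / b) q y * qPochInt (q / c) q y * qPochInt (q / d) q y))

theorem NP.inv {q t : ℂ} (hq : q ≠ 0) (h : NP q t) : NP q (q / t) := by
  refine ⟨div_ne_zero hq h.1, fun m hm => h.2 (1 - m) ?_⟩
  have h0 := h.1
  have hm' : q ^ m ≠ 0 := zpow_ne_zero _ hq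
  rw [zpow_sub₀ hq, zpow_one, ← hm]
  field_simp

theorem NP.inf {q t : ℂ} (hq : q ≠ 0) (hq1 : ‖q‖ < 1) (h : NP q t) : qPochInf t q ≠ 0 :=
  qInf_ne_zero hq1 t (fun k => h.one_sub hq k)

theorem NP.one_subz {q t : ℂ} (hq : q ≠ 0) (h : NP q t) (k : ℤ) : 1 - t * q ^ k ≠ 0 := by
  have := (h.mul hq k).ne_one
  rw [sub_ne_zero]; exact this.symm

theorem qPochInt_zero {q t : ℂ} (hq : q ≠ 0) (hq1 : ‖q‖ < 1) (h : NP q t) : qPochInt t q 0 = 1 := by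
  simp [qPochInt, div_self (h.inf hq hq1)]

theorem qPochInt_ne {q t : ℂ} (hq : q ≠ 0) (hq1 : ‖q‖ < 1) (h : NP q t) (y : ℤ) : qPochInt t q y ≠ 0 :=
  div_ne_zero (h.inf hq hq1) ((h.mul hq y).inf hq hq1)

theorem qPochInt_succ {q t : ℂ} (hq : q ≠ 0) (hq1 : ‖q‖ < 1) (h : NP q t) (y : ℤ) :
    qPochInt t q (y + 1) = qPochInt t q y * (1 - t * q ^ y) := by
  unfold qPochInt
  have h1 := qInf_tail hq1 (t * q ^ y) 1
  have h2 := (h.mul hq y).inf hq hq1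
  have h3 := (h.mul hq (y + 1)).inf hq hq1
  have e : t * q ^ y * q ^ 1 = t * q ^ (y + 1) := by rw [zpow_add₀ hq]; simp; ring
  rw [e] at h1
  simp only [qPoch, range_one, prod_singleton, pow_zero, mul_one] at h1
  rw [div_mul_eq_mul_div, div_eq_div_iff h3 h2, h1]
  ring

noncomputable def zRat (q b c d : ℂ) (y : ℤ) : ℂ :=
  (1 - b * q ^ y) * (1 - c * q ^ y) * (1 - d * q ^ y) /
    ((1 - q / b * q ^ y) * (1 - q / c * q ^ y) * (1 - q / d * q ^ y)) * (q / (b * c * d))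

theorem Wz_zero {q b c d : ℂ} (hq : q ≠ 0) (hq1 : ‖q‖ < 1) (hb : NP q b) (hc : NP q c) (hd : NP q d) :
    Wz q b c d 0 = 1 := by
  unfold Wz
  simp [qPochInt_zero hq hq1 hb, qPochInt_zero hq hq1 hc, qPochInt_zero hq hq1 hd,
   qPochInt_zero hq hq1 (hb.inv hq), qPochInt_zero hq hq1 (hc.inv hq), qPochInt_zero hq hq1 (hd.inv hq)]

theorem Wz_succ {q b c d : ℂ} (hq : q ≠ 0) (hq1 : ‖q‖ < 1) (hb : NP q b) (hc : NP q c) (hd : NP q d) (y : ℤ) :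
    Wz q b c d (y + 1) = Wz q b c d y * zRat q b c d y := by
  unfold Wz zRat
  have : q / (b * c * d) ≠ 0 := div_ne_zero hq (mul_ne_zero (mul_ne_zero hb.1 hc.1) hd.1)
  rw [qPochInt_succ hq hq1 hb, qPochInt_succ hq hq1 hc, qPochInt_succ hq hq1 hd,
   qPochInt_succ hq hq1 (hb.inv hq), qPochInt_succ hq hq1 (hc.inv hq), qPochInt_succ hq hq1 (hd.inv hq),
   zpow_add_one₀ this]
  simp only [div_eq_mul_inv, mul_inv]
  ring

theorem Wz_nat {q b c d : ℂ} (hq : q ≠ 0) (hq1 : ‖q‖ < 1) (hb : NP q b) (hc : NP q c) (hd : NP q d) (y : ℕ) :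
    Wz q b c d y = vW q b c d y := by
  induction y with
  | zero => simp [Wz_zero hq hq1 hb hc hd, vW_zero]
  | succ y ih =>
    rw [Nat.cast_succ, Wz_succ hq hq1 hb hc hd, ih, vW_succ]
    congr 1
    unfold zRat vRat
    simp only [zpow_natCast, pow_succ, div_mul_eq_mul_div, mul_comm q]

theorem zRat_neg {q b c d : ℂ} (hq : q ≠ 0) (hb : NP q b) (hc : NP q c) (hd : NP q d) (y : ℤ) :
    zRat q b c d (-(y + 1)) * (q * zRat q b c d y) = 1 := by
  have key : ∀ t, NP q t → (1 - t * q ^ (-(y + 1))) / (1 - q / t * q ^ (-(y + 1))) *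
     ((1 - t * q ^ y) / (1 - q / t * q ^ y)) = t ^ 2 / q := by
    intro t ht
    have h0 := ht.1
    have h1 := (ht.inv hq).one_subz hq (-(y + 1))
    have h2 := (ht.inv hq).one_subz hq y
    have e : q ^ (-(y + 1)) = (q * q ^ y)⁻¹ := by rw [zpow_neg, zpow_add_one₀ hq, mul_comm]
    rw [e] at h1 ⊢
    have hz : q ^ y ≠ 0 := zpow_ne_zero _ hq
    rw [div_mul_div_comm, div_eq_div_iff (mul_ne_zero h1 h2) hq]
    field_simp
    ring
  have kb := key b hb
  have kc := key c hc
  have kd := key d hd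
  unfold zRat
  have b0 := hb.1
  have c0 := hc.1
  have d0 := hd.1
  generalize q ^ (-(y + 1)) = u at *
  generalize q ^ y = v at *
  have : (b ^ 2 / q) * (c ^ 2 / q) * (d ^ 2 / q) * (q / (b * c * d)) ^ 2 * q = 1 := by
    field_simp
  refine Eq.trans ?_ this
  rw [← kb, ← kc, ← kd]
  clear kb kc kd this key
  generalize q / (b * c * d) = e0
  generalize 1 - b * u = e1
  generalize 1 - c * u = e2
  generalize 1 - d * u = e3
  generalize 1 - b * v = e4
  generalize 1 - c * v = e5
  generalize 1 - d * v = e6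
  generalize 1 - q / b * u = f1
  generalize 1 - q / c * u = f2
  generalize 1 - q / d * u = f3
  generalize 1 - q / b * v = f4
  generalize 1 - q / c * v = f5
  generalize 1 - q / d * v = f6
  simp only [div_eq_mul_inv, mul_inv]
  ring

theorem Wz_neg {q b c d : ℂ} (hq : q ≠ 0) (hq1 : ‖q‖ < 1) (hb : NP q b) (hc : NP q c) (hd : NP q d) (y : ℕ) :
    Wz q b c d (-(y : ℤ)) = q ^ y * vW q b c d y := by
  induction y with
  | zero => simp [Wz_zero hq hq1 hb hc hd, vW_zero]
  | succ y ih =>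
    have h1 := Wz_succ hq hq1 hb hc hd (-((y : ℤ) + 1))
    rw [show -((y : ℤ) + 1) + 1 = -(y : ℤ) by ring, ih] at h1
    have h2 := zRat_neg hq hb hc hd (y : ℤ)
    have h3 : zRat q b c d (y : ℤ) = vRat q b c d y := by
      unfold zRat vRat
      simp only [zpow_natCast, pow_succ, div_mul_eq_mul_div, mul_comm q]
    rw [h3] at h2
    rw [Nat.cast_succ, vW_succ, pow_succ]
    linear_combination -Wz q b c d (-(y + 1)) * h2 - q * vRat q b c d y * h1

theorem fz_bound {q b c d : ℂ} (hq : q ≠ 0) (hq1 : ‖q‖ < 1) (K r j : ℕ) (hK : r + j ≤ K)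
    (hconv : ‖q / (b * c * d)‖ < ‖q‖ ^ K) (g : ℕ → ℂ) (hg : ∀ y, ‖g y‖ ≤ (‖q‖ ^ (r * y))⁻¹) :
    Summable (fun y => g y * vW q b c d y * (q ^ y + (q ^ y)⁻¹) ^ j) := by
  have hq0 : 0 < ‖q‖ := norm_pos_iff.2 hq
  have hs : Summable (fun y => vW q b c d y * ((q ^ K)⁻¹) ^ y) := by
    apply vW_summable hq1
    rw [norm_mul, norm_inv, norm_pow, ← div_eq_mul_inv, div_lt_one (by positivity)]
    exact hconv
  refine Summable.of_norm_bounded (hs.norm.mul_left (2 ^ j)) (fun y => ?_)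
  have hC : ‖q ^ y + (q ^ y)⁻¹‖ ≤ 2 * (‖q‖ ^ y)⁻¹ := by
    refine (norm_add_le _ _).trans ?_
    rw [norm_inv, norm_pow]
    have h1 : ‖q‖ ^ y ≤ 1 := pow_le_one₀ hq0.le hq1.le
    have h2 : 1 ≤ (‖q‖ ^ y)⁻¹ := (one_le_inv₀ (by positivity)).2 h1
    linarith
  rw [norm_mul, norm_mul, norm_pow, norm_mul, norm_pow, norm_inv, norm_pow]
  calc ‖g y‖ * ‖vW q b c d y‖ * ‖q ^ y + (q ^ y)⁻¹‖ ^ j ≤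
     (‖q‖ ^ (r * y))⁻¹ * ‖vW q b c d y‖ * (2 * (‖q‖ ^ y)⁻¹) ^ j := by
        gcongr
        exact hg y
    _ = 2 ^ j * (‖vW q b c d y‖ * (‖q‖ ^ ((r + j) * y))⁻¹) := by
      rw [mul_pow, inv_pow, ← pow_mul, add_mul, pow_add, mul_inv, mul_comm j y]; ring
    _ ≤ 2 ^ j * (‖vW q b c d y‖ * (‖q‖ ^ (K * y))⁻¹) := by
      gcongr 2 ^ j * (_ * ?_)
      refine inv_anti₀ (by positivity) (pow_le_pow_of_le_one hq0.le hq1.le (by gcongr))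
    _ = _ := by rw [inv_pow, ← pow_mul]

theorem fz_sum {q b c d : ℂ} (hq : q ≠ 0) (hq1 : ‖q‖ < 1) (hb : NP q b) (hc : NP q c) (hd : NP q d)
    (K r j : ℕ) (hK : r + j ≤ K) (hconv : ‖q / (b * c * d)‖ < ‖q‖ ^ K) :
    Summable (fun y : ℤ => q ^ (-(r * y) : ℤ) * Wz q b c d y * (q ^ y + (q ^ y)⁻¹) ^ j) ∧
    ∑' y : ℤ, q ^ (-(r * y) : ℤ) * Wz q b c d y * (q ^ y + (q ^ y)⁻¹) ^ j =
    ∑' y : ℕ, vM q b c d y * ((Pc r).eval (q ^ y + (q ^ y)⁻¹) * (q ^ y + (q ^ y)⁻¹) ^ j) := by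
  have hq0 : 0 < ‖q‖ := norm_pos_iff.2 hq
  have e1 : ∀ y : ℕ, q ^ (-(r * (y : ℤ)) : ℤ) * Wz q b c d (y : ℤ) * (q ^ (y : ℤ) + (q ^ (y : ℤ))⁻¹) ^ j =
      (q ^ (r * y))⁻¹ * vW q b c d y * (q ^ y + (q ^ y)⁻¹) ^ j := by
    intro y
    rw [Wz_nat hq hq1 hb hc hd, zpow_neg, zpow_natCast]
    congr 3
  have e2 : ∀ y : ℕ, q ^ (-(r * (-(y : ℤ))) : ℤ) * Wz q b c d (-(y : ℤ)) * (q ^ (-(y : ℤ)) + (q ^ (-(y : ℤ)))⁻¹) ^ j =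
      (q ^ (r * y) * q ^ y) * vW q b c d y * (q ^ y + (q ^ y)⁻¹) ^ j := by
    intro y
    rw [Wz_neg hq hq1 hb hc hd, zpow_neg q (y : ℤ), zpow_natCast, inv_inv, add_comm (q ^ y)⁻¹]
    rw [show (-(r * (-(y : ℤ))) : ℤ) = ((r * y : ℕ) : ℤ) by push_cast; ring, zpow_natCast]
    ring
  have s1 := fz_bound hq hq1 K r j hK hconv (fun y => (q ^ (r * y))⁻¹) (fun y => by simp)
  have s2 := fz_bound hq hq1 K r j hK hconv (fun y => q ^ (r * y) * q ^ y) (fun y => by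
    rw [norm_mul, norm_pow, norm_pow]
    have h1 : ‖q‖ ^ (r * y) ≤ 1 := pow_le_one₀ hq0.le hq1.le
    have h3 : ‖q‖ ^ y ≤ 1 := pow_le_one₀ hq0.le hq1.le
    have h2 : 1 ≤ (‖q‖ ^ (r * y))⁻¹ := (one_le_inv₀ (by positivity)).2 h1
    exact (mul_le_one₀ h1 (by positivity) h3).trans h2)
  have s1' := s1
  have s2' := s2
  simp_rw [← e1] at s1
  simp_rw [← e2] at s2
  refine ⟨Summable.of_nat_of_neg (f := fun y : ℤ => q ^ (-(r * y) : ℤ) * Wz q b c d y * (q ^ y + (q ^ y)⁻¹) ^ j) s1 s2, ?_⟩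
  rw [Summable.tsum_of_nat_of_neg (f := fun y : ℤ => q ^ (-(r * y) : ℤ) * Wz q b c d y * (q ^ y + (q ^ y)⁻¹) ^ j) s1 s2]
  simp_rw [e1, e2]
  rw [← Summable.tsum_add s1' s2', (s1'.add s2').tsum_eq_zero_add]
  have s3 : Summable (fun y => vM q b c d y * ((Pc r).eval (q ^ y + (q ^ y)⁻¹) * (q ^ y + (q ^ y)⁻¹) ^ j)) := by
    rw [← summable_nat_add_iff 1]
    refine ((summable_nat_add_iff 1).2 (s1'.add s2')).congr (fun y => ?_)
    rw [vM_succ]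
    have := Pc_eval (z := q ^ (y + 1)) (pow_ne_zero _ hq) r
    rw [← pow_mul, mul_comm (y + 1) r, pow_succ (q ^ (y + 1)) r, ← pow_mul, mul_comm (y + 1) r] at this
    linear_combination - vW q b c d (y + 1) * (q ^ (y + 1) + (q ^ (y + 1))⁻¹) ^ j * this
  rw [s3.tsum_eq_zero_add]
  have e0 : ∀ y : ℕ, (q ^ (r * (y + 1)))⁻¹ * vW q b c d (y + 1) * (q ^ (y + 1) + (q ^ (y + 1))⁻¹) ^ j +
     (q ^ (r * (y + 1)) * q ^ (y + 1)) * vW q b c d (y + 1) * (q ^ (y + 1) + (q ^ (y + 1))⁻¹) ^ j =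
     vM q b c d (y + 1) * ((Pc r).eval (q ^ (y + 1) + (q ^ (y + 1))⁻¹) * (q ^ (y + 1) + (q ^ (y + 1))⁻¹) ^ j) := by
    intro y
    rw [vM_succ]
    have := Pc_eval (z := q ^ (y + 1)) (pow_ne_zero _ hq) r
    rw [← pow_mul, mul_comm (y + 1) r, pow_succ (q ^ (y + 1)) r, ← pow_mul, mul_comm (y + 1) r] at this
    linear_combination - vW q b c d (y + 1) * (q ^ (y + 1) + (q ^ (y + 1))⁻¹) ^ j * this
  simp_rw [e0]
  simp [Wz_zero hq hq1 hb hc hd, vW_zero, vM_zero]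
  have := Pc_two r
  rw [this]
  ring



theorem hasSum_two {ι κ : Type} {f : ι → ℂ} {g : κ → ℂ} {A B : ℂ} (hf : HasSum f A) (hg : HasSum g B) :
    HasSum (fun p : ι × κ => f p.1 * g p.2) (A * B) := by
  have h1 : Summable (fun x => ‖f x‖) := hf.summable.norm
  have h2 : Summable (fun x => ‖g x‖) := hg.summable.norm
  exact HasSum.mul hf hg (summable_mul_of_summable_norm h1 h2)

theorem pi_tsum : ∀ (n : ℕ) (f : Fin n → ℤ → ℂ), (∀ i, Summable (f i)) →
    HasSum (fun μ : Fin n → ℤ => ∏ i, f i (μ i)) (∏ i, ∑' y, f i y) := by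
  intro n
  induction n with
  | zero =>
    intro f _
    simp
  | succ n ih =>
    intro f hf
    have h1 := ih (fun i => f i.succ) (fun i => hf i.succ)
    have h2 := hasSum_two (hf 0).hasSum h1
    rw [Fin.prod_univ_succ, ← (Fin.consEquiv (fun _ : Fin (n + 1) => ℤ)).hasSum_iff]
    convert h2 using 1
    ext p
    simp [Fin.prod_univ_succ, Fin.consEquiv]

theorem det_tsum (n : ℕ) (w : Fin n → ℤ → ℂ) (C : ℤ → ℂ)
    (hw : ∀ i j : Fin n, Summable (fun y => w i y * C y ^ (j : ℕ))) :
    HasSum (fun y : Fin n → ℤ => (∏ i, w i (y i)) * (Matrix.vandermonde (fun i => C (y i))).det)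
      (Matrix.of (fun i j : Fin n => ∑' y, w i y * C y ^ (j : ℕ))).det := by
  rw [← Matrix.det_transpose, Matrix.det_apply']
  have : ∀ y : Fin n → ℤ, (∏ i, w i (y i)) * (Matrix.vandermonde (fun i => C (y i))).det =
     ∑ σ : Equiv.Perm (Fin n), ((Equiv.Perm.sign σ : ℤ) : ℂ) * ∏ i, (w i (y i) * C (y i) ^ ((σ i : Fin n) : ℕ)) := by
    intro y
    rw [← Matrix.det_transpose, Matrix.det_apply', mul_sum]
    refine sum_congr rfl (fun σ _ => ?_)
    rw [prod_mul_distrib]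
    simp only [Matrix.transpose_apply, Matrix.vandermonde_apply]
    ring
  simp_rw [this]
  refine hasSum_sum (fun σ _ => ?_)
  exact (pi_tsum n (fun i y => w i y * C y ^ ((σ i : Fin n) : ℕ)) (fun i => hw i (σ i))).mul_left _

/-- summation over the integer lattice, combined with the determinant evaluation -/
theorem lattice_sum {q b c d : ℂ} (hq : q ≠ 0) (hq1 : ‖q‖ < 1) (hb : NP q b) (hc : NP q c) (hd : NP q d)
    (N : ℕ) (hconv : ‖q / (b * c * d)‖ < ‖q‖ ^ (2 * N)) :
    HasSum (fun y : Fin (N + 1) → ℤ => (∏ i : Fin (N + 1), (q ^ (-(((i : ℕ) : ℤ) * y i)) * Wz q b c d (y i))) *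
      (Matrix.vandermonde (fun i => q ^ (y i) + (q ^ (y i))⁻¹)).det)
    (Matrix.of (fun i j : Fin (N + 1) => ∑' y, vM q b c d y *
      ((Pc i).eval (q ^ y + (q ^ y)⁻¹) * (q ^ y + (q ^ y)⁻¹) ^ (j : ℕ)))).det := by
  have h := det_tsum (N + 1) (fun i y => q ^ (-(((i : ℕ) : ℤ) * y)) * Wz q b c d y) (fun y => q ^ y + (q ^ y)⁻¹)
    (fun i j => (fz_sum hq hq1 hb hc hd (2 * N) i j (by omega) hconv).1)
  convert h using 2
  ext i j
  simp only [Matrix.of_apply]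
  rw [(fz_sum hq hq1 hb hc hd (2 * N) i j (by omega) hconv).2]



theorem prod_rev {N : ℕ} (f : Fin N → Fin N → ℂ) :
    ∏ i, ∏ j ∈ Ioi i, f i j = ∏ i, ∏ j ∈ Ioi i, f (Fin.rev j) (Fin.rev i) := by
  rw [prod_sigma', prod_sigma']
  refine prod_nbij' (fun p => ⟨Fin.rev p.2, Fin.rev p.1⟩) (fun p => ⟨Fin.rev p.2, Fin.rev p.1⟩) ?_ ?_ ?_ ?_ ?_
  · simp
  · simp
  · simp
  · simp
  · simp

theorem qPochInt_shift {q t : ℂ} (hq : q ≠ 0) (hq1 : ‖q‖ < 1) (ht : NP q t) (r m : ℤ) :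
    qPochInt (t * q ^ r) q m = qPochInt t q (m + r) / qPochInt t q r := by
  have h1 := ht.inf hq hq1
  have h2 := (ht.mul hq r).inf hq hq1
  have h3 := (ht.mul hq (m + r)).inf hq hq1
  unfold qPochInt
  rw [mul_assoc t, ← zpow_add₀ hq, add_comm r m]
  field_simp

theorem one_dim {q b c d : ℂ} (hq : q ≠ 0) (hq1 : ‖q‖ < 1) (hb : NP q b) (hc : NP q c) (hd : NP q d)
    (r m : ℤ) :
    (q ^ (-r) * (q / (b * c * d))) ^ m *
     ((qPochInt (b * q ^ r) q m * qPochInt (c * q ^ r) q m * qPochInt (d * q ^ r) q m) /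
      (qPochInt (q / b * q ^ r) q m * qPochInt (q / c * q ^ r) q m * qPochInt (q / d * q ^ r) q m)) =
    q ^ (r * r) / Wz q b c d r * (q ^ (-(r * (m + r))) * Wz q b c d (m + r)) := by
  have b0 := hb.1
  have c0 := hc.1
  have d0 := hd.1
  have Z : q / (b * c * d) ≠ 0 := div_ne_zero hq (by simp [b0, c0, d0])
  rw [qPochInt_shift hq hq1 hb, qPochInt_shift hq hq1 hc, qPochInt_shift hq hq1 hd,
   qPochInt_shift hq hq1 (hb.inv hq), qPochInt_shift hq hq1 (hc.inv hq), qPochInt_shift hq hq1 (hd.inv hq)]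
  unfold Wz
  rw [mul_zpow, ← zpow_mul, zpow_add₀ Z, show -(r * (m + r)) = -r * m + -(r * r) by ring, zpow_add₀ hq, zpow_neg q (r * r)]
  have x1 : q ^ (r * r) ≠ 0 := zpow_ne_zero _ hq
  have x2 : (q / (b * c * d)) ^ r ≠ 0 := zpow_ne_zero _ Z
  generalize q ^ (r * r) = y1 at *
  generalize (q / (b * c * d)) ^ r = y2 at *
  generalize (q / (b * c * d)) ^ m = y3 at *
  generalize q ^ (-r * m) = y4 at *
  have e : ∀ (p1 p2 p3 p4 p5 p6 r1 r2 r3 r4 r5 r6 : ℂ), y4 * y3 * (p1 / r1 * (p2 / r2) * (p3 / r3) / (p4 / r4 * (p5 / r5) * (p6 / r6))) =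
    y1 / (y2 * (r1 * r2 * r3 / (r4 * r5 * r6))) * (y4 * y1⁻¹ * (y3 * y2 * (p1 * p2 * p3 / (p4 * p5 * p6)))) := by
    intro p1 p2 p3 p4 p5 p6 r1 r2 r3 r4 r5 r6
    have a1 : y1 * y1⁻¹ = 1 := mul_inv_cancel₀ x1
    have a2 : y2 * y2⁻¹ = 1 := mul_inv_cancel₀ x2
    simp only [div_eq_mul_inv, mul_inv, inv_inv]
    linear_combination (-(y4 * y3 * p1 * r1⁻¹ * p2 * r2⁻¹ * p3 * r3⁻¹ * p4⁻¹ * r4 * p5⁻¹ * r5 * p6⁻¹ * r6)) * (y2 * y2⁻¹ * a1 + a2)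
  exact e _ _ _ _ _ _ _ _ _ _ _ _


noncomputable def DD (q : ℂ) (N : ℕ) : ℂ := ∏ i : Fin (N + 1), ∏ j ∈ Ioi i,
  ((1 - q ^ (((j : ℕ) : ℤ) - ((i : ℕ) : ℤ))) * (1 - q ^ (2 * ((N + 1 : ℕ) : ℤ) - 2 - ((i : ℕ) : ℤ) - ((j : ℕ) : ℤ))))

noncomputable def GG (q b c d : ℂ) (N : ℕ) (y : Fin (N + 1) → ℤ) : ℂ :=
  (∏ i : Fin (N + 1), (q ^ (-(((i : ℕ) : ℤ) * y i)) * Wz q b c d (y i))) *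
      (Matrix.vandermonde (fun i => q ^ (y i) + (q ^ (y i))⁻¹)).det

theorem zpow_sum' {q : ℂ} (hq : q ≠ 0) {ι : Type} (s : Finset ι) (f : ι → ℤ) :
    q ^ (∑ i ∈ s, f i) = ∏ i ∈ s, q ^ f i := by
  classical
  induction s using Finset.induction_on with
  | empty => simp
  | insert a s ha ih => rw [sum_insert ha, prod_insert ha, zpow_add₀ hq, ih]

theorem dbl (q : ℂ) (hq : q ≠ 0) (N : ℕ) (μ : Fin (N + 1) → ℤ) :
    ∏ i : Fin (N + 1), ∏ j ∈ Finset.Ioi i,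
        ((1 - q ^ (((j : ℕ) : ℤ) - ((i : ℕ) : ℤ) + μ i - μ j)) *
          (1 - q ^ (2 * ((N + 1 : ℕ) : ℤ) - 2 - ((i : ℕ) : ℤ) - ((j : ℕ) : ℤ) + μ i + μ j)) /
          ((1 - q ^ (((j : ℕ) : ℤ) - ((i : ℕ) : ℤ))) ^ 2 *
            (1 - q ^ (2 * ((N + 1 : ℕ) : ℤ) - 2 - ((i : ℕ) : ℤ) - ((j : ℕ) : ℤ))) ^ 2)) =
    (∏ r : Fin (N + 1), q ^ (((r : ℕ) : ℤ) * (μ (Fin.rev r) + ((r : ℕ) : ℤ)))) *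
     (Matrix.vandermonde (fun r : Fin (N + 1) => q ^ (μ (Fin.rev r) + ((r : ℕ) : ℤ)) +
       (q ^ (μ (Fin.rev r) + ((r : ℕ) : ℤ)))⁻¹)).det / DD q N ^ 2 := by
  rw [Matrix.det_vandermonde]
  unfold DD
  rw [← prod_pow]
  simp_rw [← prod_pow]
  simp_rw [prod_div_distrib]
  congr 1
  · rw [prod_rev]
    have : ∀ r : Fin (N + 1), q ^ (((r : ℕ) : ℤ) * (μ (Fin.rev r) + ((r : ℕ) : ℤ))) =
       ∏ j ∈ Iio r, q ^ (μ (Fin.rev r) + ((r : ℕ) : ℤ)) := by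
      intro r
      rw [prod_const, Fin.card_Iio, mul_comm, zpow_mul, zpow_natCast]
    simp_rw [this]
    have sw : ∀ f : Fin (N + 1) → Fin (N + 1) → ℂ, ∏ r, ∏ j ∈ Iio r, f r j = ∏ j, ∏ r ∈ Ioi j, f r j := by
      intro f
      refine prod_comm' ?_
      simp
    rw [sw (fun r _ => q ^ (μ (Fin.rev r) + ((r : ℕ) : ℤ))), ← prod_mul_distrib]
    refine prod_congr rfl (fun i _ => ?_)
    rw [← prod_mul_distrib]
    refine prod_congr rfl (fun j _ => ?_)
    have hi : ((Fin.rev i : Fin (N + 1)) : ℕ) = (N - i : ℤ) := by rw [Fin.val_rev]; omega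
    have hj : ((Fin.rev j : Fin (N + 1)) : ℕ) = (N - j : ℤ) := by rw [Fin.val_rev]; omega
    rw [hi, hj]
    rw [show (N - i : ℤ) - (N - j) + μ (Fin.rev j) - μ (Fin.rev i) = (μ (Fin.rev j) + j) - (μ (Fin.rev i) + i) by ring,
      show 2 * ((N + 1 : ℕ) : ℤ) - 2 - (N - j) - (N - i) + μ (Fin.rev j) + μ (Fin.rev i) = (μ (Fin.rev j) + j) + (μ (Fin.rev i) + i) by push_cast; ring]
    generalize (μ (Fin.rev j) + ((j : ℕ) : ℤ)) = u
    generalize (μ (Fin.rev i) + ((i : ℕ) : ℤ)) = v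
    rw [zpow_sub₀ hq, zpow_add₀ hq]
    have := zpow_ne_zero u hq
    have := zpow_ne_zero v hq
    field_simp
    ring
  · simp_rw [mul_pow]

theorem F_rw {q b c d s : ℂ} (hq : q ≠ 0) (hq1 : ‖q‖ < 1) (hb : NP q b) (hc : NP q c) (hd : NP q d)
    (N : ℕ) (hs : q / (b * c * d) = s * q ^ N) (hs0 : s ≠ 0) (μ : Fin (N + 1) → ℤ) :
      q ^ ((1 - ((N + 1 : ℕ) : ℤ)) * (∑ i : Fin (N + 1), μ i) + 2 * ∑ i : Fin (N + 1), ((i : ℕ) : ℤ) * μ i) * s ^ (∑ i : Fin (N + 1), μ i) *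
      (qPochIntVec (N + 1) (b * q ^ N) q μ * qPochIntVec (N + 1) (c * q ^ N) q μ *
        qPochIntVec (N + 1) (d * q ^ N) q μ /
        (qPochIntVec (N + 1) (q / b * q ^ N) q μ * qPochIntVec (N + 1) (q / c * q ^ N) q μ *
          qPochIntVec (N + 1) (q / d * q ^ N) q μ)) *
      ∏ i : Fin (N + 1), ∏ j ∈ Finset.Ioi i,
        ((1 - q ^ (((j : ℕ) : ℤ) - ((i : ℕ) : ℤ) + μ i - μ j)) *
          (1 - q ^ (2 * ((N + 1 : ℕ) : ℤ) - 2 - ((i : ℕ) : ℤ) - ((j : ℕ) : ℤ) + μ i + μ j)) /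
          ((1 - q ^ (((j : ℕ) : ℤ) - ((i : ℕ) : ℤ))) ^ 2 *
            (1 - q ^ (2 * ((N + 1 : ℕ) : ℤ) - 2 - ((i : ℕ) : ℤ) - ((j : ℕ) : ℤ))) ^ 2)) =
    (∏ r ∈ range (N + 1), q ^ (2 * r ^ 2) / vW q b c d r) / DD q N ^ 2 *
      GG q b c d N (fun r => μ (Fin.rev r) + ((r : ℕ) : ℤ)) := by
  rw [dbl q hq]
  unfold GG
  have key : q ^ ((1 - ((N + 1 : ℕ) : ℤ)) * (∑ i : Fin (N + 1), μ i) + 2 * ∑ i : Fin (N + 1), ((i : ℕ) : ℤ) * μ i) * s ^ (∑ i : Fin (N + 1), μ i) *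
      (qPochIntVec (N + 1) (b * q ^ N) q μ * qPochIntVec (N + 1) (c * q ^ N) q μ *
        qPochIntVec (N + 1) (d * q ^ N) q μ /
        (qPochIntVec (N + 1) (q / b * q ^ N) q μ * qPochIntVec (N + 1) (q / c * q ^ N) q μ *
          qPochIntVec (N + 1) (q / d * q ^ N) q μ)) * (∏ r : Fin (N + 1), q ^ (((r : ℕ) : ℤ) * (μ (Fin.rev r) + ((r : ℕ) : ℤ)))) =
    (∏ r ∈ range (N + 1), q ^ (2 * r ^ 2) / vW q b c d r) *
      (∏ i : Fin (N + 1), (q ^ (-(((i : ℕ) : ℤ) * (μ (Fin.rev i) + ((i : ℕ) : ℤ)))) * Wz q b c d (μ (Fin.rev i) + ((i : ℕ) : ℤ)))) := by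
    rw [← Fin.prod_univ_eq_prod_range (fun r => q ^ (2 * r ^ 2) / vW q b c d r)]
    rw [mul_sum, mul_sum, ← sum_add_distrib, zpow_sum' hq, zpow_sum' hs0]
    unfold qPochIntVec
    generalize hP : (∏ r : Fin (N + 1), q ^ (((r : ℕ) : ℤ) * (μ (Fin.rev r) + ((r : ℕ) : ℤ)))) = P
    simp only [← prod_mul_distrib, ← prod_div_distrib]
    conv_lhs => rw [← Equiv.prod_comp Fin.revPerm]
    rw [← hP, ← prod_mul_distrib]
    refine prod_congr rfl (fun i _ => ?_)
    simp only [Fin.revPerm_apply]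
    have hi : ((Fin.rev i : Fin (N + 1)) : ℕ) = (N - i : ℤ) := by rw [Fin.val_rev]; omega
    rw [hi]
    generalize μ (Fin.rev i) = m
    have ht : ∀ t : ℂ, t * q ^ N * q ^ (-(N - i) : ℤ) = t * q ^ ((i : ℕ) : ℤ) := by
      intro t
      rw [mul_assoc, ← zpow_natCast q N, ← zpow_add₀ hq]
      congr 2; ring
    simp only [ht]
    have o := one_dim hq hq1 hb hc hd ((i : ℕ) : ℤ) m
    rw [Wz_nat hq hq1 hb hc hd] at o
    have e1 : (q ^ (-((i : ℕ) : ℤ)) * (q / (b * c * d))) ^ m * q ^ (((i : ℕ) : ℤ) * ((i : ℕ) : ℤ)) =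
       q ^ ((1 - ((N + 1 : ℕ) : ℤ)) * m + 2 * ((N - i : ℤ) * m)) * s ^ m * q ^ (((i : ℕ) : ℤ) * (m + ((i : ℕ) : ℤ))) := by
      rw [hs, mul_zpow, mul_zpow, ← zpow_natCast q N, ← zpow_mul, ← zpow_mul]
      rw [show q ^ (-((i : ℕ) : ℤ) * m) * (s ^ m * q ^ ((N : ℤ) * m)) * q ^ (((i : ℕ) : ℤ) * ((i : ℕ) : ℤ)) =
        s ^ m * (q ^ (-((i : ℕ) : ℤ) * m) * q ^ ((N : ℤ) * m) * q ^ (((i : ℕ) : ℤ) * ((i : ℕ) : ℤ))) by ring]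
      rw [mul_comm _ (s ^ m), mul_assoc (s ^ m), ← zpow_add₀ hq, ← zpow_add₀ hq, ← zpow_add₀ hq]
      congr 2
      push_cast
      ring
    have e2 : q ^ (2 * (i : ℕ) ^ 2) = q ^ (((i : ℕ) : ℤ) * ((i : ℕ) : ℤ)) * q ^ (((i : ℕ) : ℤ) * ((i : ℕ) : ℤ)) := by
      rw [← zpow_add₀ hq, ← zpow_natCast]
      congr 1
      push_cast
      ring
    rw [e2]
    rw [mul_right_comm, ← e1, mul_right_comm, o]
    ring
  rw [← mul_div_assoc, ← mul_assoc, key]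
  ring



theorem qPochInt_nat {q t : ℂ} (hq : q ≠ 0) (hq1 : ‖q‖ < 1) (ht : NP q t) (M : ℕ) :
    qPochInt t q (M : ℤ) = qPoch t q M := by
  unfold qPochInt
  rw [zpow_natCast, div_eq_iff ((ht.mul_nat hq M).inf hq hq1), qInf_tail hq1 t M]

theorem vW_eq {q b c d : ℂ} (hq : q ≠ 0) (hq1 : ‖q‖ < 1) (hb : NP q b) (hc : NP q c) (hd : NP q d) (M : ℕ) :
    vW q b c d M = (q / (b * c * d)) ^ M * ((qPoch b q M * qPoch c q M * qPoch d q M) /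
      (qPoch (q / b) q M * qPoch (q / c) q M * qPoch (q / d) q M)) := by
  rw [← Wz_nat hq hq1 hb hc hd]
  unfold Wz
  rw [qPochInt_nat hq hq1 hb, qPochInt_nat hq hq1 hc, qPochInt_nat hq hq1 hd,
   qPochInt_nat hq hq1 (hb.inv hq), qPochInt_nat hq hq1 (hc.inv hq), qPochInt_nat hq hq1 (hd.inv hq), zpow_natCast]

theorem vW_ne {q b c d : ℂ} (hq : q ≠ 0) (hq1 : ‖q‖ < 1) (hb : NP q b) (hc : NP q c) (hd : NP q d) (M : ℕ) :
    vW q b c d M ≠ 0 := by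
  rw [vW_eq hq hq1 hb hc hd]
  have b0 := hb.1
  have c0 := hc.1
  have d0 := hd.1
  have h1 := hb.qPoch hq M
  have h2 := hc.qPoch hq M
  have h3 := hd.qPoch hq M
  have h4 := (hb.inv hq).qPoch hq M
  have h5 := (hc.inv hq).qPoch hq M
  have h6 := (hd.inv hq).qPoch hq M
  refine mul_ne_zero (pow_ne_zero _ (div_ne_zero hq ?_)) (div_ne_zero ?_ ?_) <;> simp [*]

theorem C_ne {q : ℂ} (hq : q ≠ 0) (hq1 : ‖q‖ < 1) {i j : ℕ} (h : i < j) :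
    q ^ j + (q ^ j)⁻¹ - (q ^ i + (q ^ i)⁻¹) = (q ^ j)⁻¹ * ((1 - q ^ (j - i)) * (1 - q ^ (i + j))) ∧
    (1 - q ^ (j - i)) * (1 - q ^ (i + j)) ≠ 0 := by
  constructor
  · have e : q ^ j = q ^ i * q ^ (j - i) := by rw [← pow_add]; congr 1; omega
    rw [pow_add, e]
    have := pow_ne_zero i hq
    have := pow_ne_zero (j - i) hq
    field_simp
    ring
  · have h1 := pow_ne_one' hq1 (j - i - 1)
    have h2 := pow_ne_one' hq1 (i + j - 1)
    rw [show j - i - 1 + 1 = j - i by omega] at h1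
    rw [show i + j - 1 + 1 = i + j by omega] at h2
    exact mul_ne_zero h1 h2

noncomputable def yM (N M : ℕ) : Fin (N + 1) → ℤ := fun r => if r = Fin.last N then (M : ℤ) else ((r : ℕ) : ℤ)

theorem conv_of_sum {q b c d : ℂ} (hq : q ≠ 0) (hq1 : ‖q‖ < 1) (hb : NP q b) (hc : NP q c) (hd : NP q d)
    (N : ℕ) (hG : Summable (GG q b c d N)) : ‖q / (b * c * d)‖ < ‖q‖ ^ (2 * N) := by
  have hq0 : 0 < ‖q‖ := norm_pos_iff.2 hq
  have b0 := hb.1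
  have c0 := hc.1
  have d0 := hd.1
  obtain ⟨Z, hZ⟩ : ∃ Z, Z = q / (b * c * d) := ⟨_, rfl⟩
  rw [← hZ]
  have Z0 : Z ≠ 0 := hZ ▸ div_ne_zero hq (by simp [b0, c0, d0])
  have inj : Function.Injective (yM N) := by
    intro M M' h
    have := congrFun h (Fin.last N)
    simpa [yM] using this
  have lim0 : Tendsto (fun M => GG q b c d N (yM N M)) atTop (𝓝 0) :=
    (hG.comp_injective inj).tendsto_atTop_zero
  let A : ℕ → Fin (N + 1) → ℂ := fun M i => if i = Fin.last N then vW q b c d M / Z ^ M else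
    q ^ (-(((i : ℕ) : ℤ) * ((i : ℕ) : ℤ))) * Wz q b c d ((i : ℕ) : ℤ)
  let V : ℕ → Fin (N + 1) → ℂ := fun M i => q ^ (yM N M i) + (q ^ (yM N M i))⁻¹
  let B : ℕ → Fin (N + 1) → Fin (N + 1) → ℂ := fun M i j => (V M j - V M i) * (if j = Fin.last N then q ^ M else 1)
  have hg : ∀ M, GG q b c d N (yM N M) = ((∏ i, A M i) * ∏ i, ∏ j ∈ Ioi i, B M i j) * (Z / q ^ (2 * N)) ^ M := by
    intro M
    have h1 : ∏ i : Fin (N + 1), (q ^ (-(((i : ℕ) : ℤ) * yM N M i)) * Wz q b c d (yM N M i)) =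
        (∏ i, A M i) * (Z / q ^ N) ^ M := by
      rw [Fin.prod_univ_castSucc, Fin.prod_univ_castSucc (f := A M)]
      have : ∀ i : Fin N, (q ^ (-((((Fin.castSucc i : Fin (N + 1)) : ℕ) : ℤ) * yM N M (Fin.castSucc i))) * Wz q b c d (yM N M (Fin.castSucc i))) = A M (Fin.castSucc i) := by
        intro i
        have : Fin.castSucc i ≠ Fin.last N := (Fin.castSucc_lt_last i).ne
        simp [A, yM, this]
      simp_rw [this]
      rw [mul_assoc]
      congr 1
      simp only [A, yM, if_true, Fin.val_last]
      rw [Wz_nat hq hq1 hb hc hd, div_pow, ← pow_mul, zpow_neg]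
      rw [show ((N : ℤ) * (M : ℤ)) = ((N * M : ℕ) : ℤ) by push_cast; rfl, zpow_natCast]
      have := pow_ne_zero M Z0
      field_simp
    have h2 : (Matrix.vandermonde (fun i => q ^ (yM N M i) + (q ^ (yM N M i))⁻¹)).det * q ^ (N * M) =
        ∏ i, ∏ j ∈ Ioi i, B M i j := by
      rw [Matrix.det_vandermonde]
      simp only [B, prod_mul_distrib]
      congr 1
      simp only [prod_ite_eq', mem_Ioi]
      rw [Fin.prod_univ_castSucc]
      simp [Fin.castSucc_lt_last, ← pow_mul, mul_comm]
    unfold GG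
    rw [h1, ← h2]
    generalize (Matrix.vandermonde (fun i => q ^ (yM N M i) + (q ^ (yM N M i))⁻¹)).det = W0
    rw [two_mul, pow_add, div_pow, div_pow, mul_pow, pow_mul]
    have := pow_ne_zero M (pow_ne_zero N hq)
    field_simp
  have limA : ∃ a, a ≠ 0 ∧ Tendsto (fun M => ∏ i, A M i) atTop (𝓝 a) := by
    let a : Fin (N + 1) → ℂ := fun i => if i = Fin.last N then
      (qPochInf b q * qPochInf c q * qPochInf d q) / (qPochInf (q / b) q * qPochInf (q / c) q * qPochInf (q / d) q) else
      q ^ (-(((i : ℕ) : ℤ) * ((i : ℕ) : ℤ))) * Wz q b c d ((i : ℕ) : ℤ)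
    refine ⟨∏ i, a i, ?_, tendsto_finsetProd _ (fun i _ => ?_)⟩
    · refine prod_ne_zero_iff.2 (fun i _ => ?_)
      simp only [a]
      split_ifs
      · have h1 := hb.inf hq hq1
        have h2 := hc.inf hq hq1
        have h3 := hd.inf hq hq1
        have h4 := (hb.inv hq).inf hq hq1
        have h5 := (hc.inv hq).inf hq hq1
        have h6 := (hd.inv hq).inf hq hq1
        refine div_ne_zero ?_ ?_ <;> simp [*]
      · rw [Wz_nat hq hq1 hb hc hd]
        exact mul_ne_zero (zpow_ne_zero _ hq) (vW_ne hq hq1 hb hc hd _)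
    · simp only [A, a]
      split_ifs
      · have h4 := (hb.inv hq).inf hq hq1
        have h5 := (hc.inv hq).inf hq hq1
        have h6 := (hd.inv hq).inf hq hq1
        have := (((qInf_tendsto hq1 b).mul (qInf_tendsto hq1 c)).mul (qInf_tendsto hq1 d)).div
          (((qInf_tendsto hq1 (q / b)).mul (qInf_tendsto hq1 (q / c))).mul (qInf_tendsto hq1 (q / d))) (by simp [*])
        refine this.congr (fun M => ?_)
        rw [vW_eq hq hq1 hb hc hd, ← hZ, mul_div_cancel_left₀ _ (pow_ne_zero M Z0)]
        rfl
      · exact tendsto_const_nhds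
  have limB : ∃ a, a ≠ 0 ∧ Tendsto (fun M => ∏ i, ∏ j ∈ Ioi i, B M i j) atTop (𝓝 a) := by
    let a : Fin (N + 1) → Fin (N + 1) → ℂ := fun i j => if j = Fin.last N then 1 else
      q ^ (j : ℕ) + (q ^ (j : ℕ))⁻¹ - (q ^ (i : ℕ) + (q ^ (i : ℕ))⁻¹)
    refine ⟨∏ i, ∏ j ∈ Ioi i, a i j, ?_, tendsto_finsetProd _ (fun i _ => tendsto_finsetProd _ (fun j hj => ?_))⟩
    · refine prod_ne_zero_iff.2 (fun i _ => prod_ne_zero_iff.2 (fun j hj => ?_))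
      simp only [a]
      split_ifs
      · exact one_ne_zero
      · have := C_ne hq hq1 (i := i) (j := j) (Fin.lt_def.1 (mem_Ioi.1 hj))
        rw [this.1]
        exact mul_ne_zero (inv_ne_zero (pow_ne_zero _ hq)) this.2
    · have hij : i ≠ Fin.last N := by
        have h1 := mem_Ioi.1 hj
        exact (h1.trans_le (Fin.le_last j)).ne
      by_cases hjl : j = Fin.last N
      · have e : ∀ M, B M i j = q ^ M * q ^ M + 1 - (q ^ (i : ℕ) + (q ^ (i : ℕ))⁻¹) * q ^ M := by
          intro M
          simp only [B, V, yM, hjl, hij, if_true, if_false, zpow_natCast]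
          have := pow_ne_zero M hq
          field_simp
        simp only [e]
        simp only [a, hjl, if_true]
        have hp := tendsto_pow_atTop_nhds_zero_of_norm_lt_one hq1
        have := ((hp.mul hp).add_const 1).sub (hp.const_mul (q ^ (i : ℕ) + (q ^ (i : ℕ))⁻¹))
        simpa using this
      · simp only [B, V, yM, hjl, hij, if_false, a, zpow_natCast, mul_one]
        exact tendsto_const_nhds
  obtain ⟨a1, ha1, l1⟩ := limA
  obtain ⟨a2, ha2, l2⟩ := limB
  have l3 := (l1.mul l2)
  by_contra hcon
  push Not at hcon
  have hL : 1 ≤ ‖Z / q ^ (2 * N)‖ := by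
    rw [norm_div, norm_pow, one_le_div (by positivity)]
    exact hcon
  have : Tendsto (fun M => (∏ i, A M i) * ∏ i, ∏ j ∈ Ioi i, B M i j) atTop (𝓝 0) := by
    rw [tendsto_zero_iff_norm_tendsto_zero] at lim0 ⊢
    refine squeeze_zero (fun _ => norm_nonneg _) (fun M => ?_) lim0
    rw [hg M, norm_mul _ ((Z / q ^ (2 * N)) ^ M), norm_pow]
    exact le_mul_of_one_le_right (norm_nonneg _) (one_le_pow₀ hL)
  exact mul_ne_zero ha1 ha2 (tendsto_nhds_unique l3 this)

def eqv (N : ℕ) : (Fin (N + 1) → ℤ) ≃ (Fin (N + 1) → ℤ) where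
  toFun μ := fun r => μ (Fin.rev r) + ((r : ℕ) : ℤ)
  invFun y := fun i => y (Fin.rev i) - (((Fin.rev i : Fin (N + 1)) : ℕ) : ℤ)
  left_inv μ := by ext i; simp
  right_inv y := by ext i; simp

theorem DD_ne {q : ℂ} (hq1 : ‖q‖ < 1) (N : ℕ) : DD q N ≠ 0 := by
  have hk : ∀ m : ℤ, 0 < m → 1 - q ^ m ≠ 0 := by
    intro m hm
    have h1 := pow_ne_one' hq1 (m.toNat - 1)
    rwa [← zpow_natCast, show ((m.toNat - 1 + 1 : ℕ) : ℤ) = m by omega] at h1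
  unfold DD
  refine prod_ne_zero_iff.2 (fun i _ => prod_ne_zero_iff.2 (fun j hj => ?_))
  have h1 : (i : ℕ) < j := Fin.lt_def.1 (mem_Ioi.1 hj)
  have h2 := j.2
  exact mul_ne_zero (hk _ (by omega)) (hk _ (by push_cast; omega))

/-- the sum of F, given the rewriting -/
theorem F_sum {q b c d : ℂ} (hq : q ≠ 0) (hq1 : ‖q‖ < 1) (hb : NP q b) (hc : NP q c) (hd : NP q d)
    (N : ℕ) (F : (Fin (N + 1) → ℤ) → ℂ)
    (hF : ∀ μ, F μ = (∏ r ∈ range (N + 1), q ^ (2 * r ^ 2) / vW q b c d r) / DD q N ^ 2 *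
      GG q b c d N (fun r => μ (Fin.rev r) + ((r : ℕ) : ℤ))) (hsum : Summable F) :
    ‖q / (b * c * d)‖ < ‖q‖ ^ (2 * N) ∧
    ∑' μ, F μ = (∏ r ∈ range (N + 1), q ^ (2 * r ^ 2) / vW q b c d r) / DD q N ^ 2 *
     (Matrix.of (fun i j : Fin (N + 1) => ∑' y, vM q b c d y *
      ((Pc i).eval (q ^ y + (q ^ y)⁻¹) * (q ^ y + (q ^ y)⁻¹) ^ (j : ℕ)))).det := by
  have K0 : (∏ r ∈ range (N + 1), q ^ (2 * r ^ 2) / vW q b c d r) / DD q N ^ 2 ≠ 0 :=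
    div_ne_zero (prod_ne_zero_iff.2 (fun r _ => div_ne_zero (pow_ne_zero _ hq) (vW_ne hq hq1 hb hc hd r)))
      (pow_ne_zero _ (DD_ne hq1 N))
  have hF' : F = fun μ => (∏ r ∈ range (N + 1), q ^ (2 * r ^ 2) / vW q b c d r) / DD q N ^ 2 *
      GG q b c d N (eqv N μ) := funext hF
  have hG : Summable (GG q b c d N) := by
    rw [hF', summable_mul_left_iff K0] at hsum
    exact (eqv N).summable_iff.1 hsum
  have hconv := conv_of_sum hq hq1 hb hc hd N hG
  refine ⟨hconv, ?_⟩
  have hl := lattice_sum hq hq1 hb hc hd N hconv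
  have : HasSum (GG q b c d N) _ := hl
  rw [hF', tsum_mul_left, (eqv N).tsum_eq (GG q b c d N), this.tsum_eq]



theorem prod_tri (n : ℕ) (f : ℕ → ℕ → ℂ) :
    ∏ i : Fin n, ∏ j ∈ Ioi i, f i j = ∏ j ∈ range n, ∏ i ∈ range j, f i j := by
  have sw : ∏ i : Fin n, ∏ j ∈ Ioi i, f i j = ∏ j : Fin n, ∏ i ∈ Iio j, f i j := by
    refine prod_comm' ?_
    simp
  rw [sw, ← Fin.prod_univ_eq_prod_range (fun j => ∏ i ∈ range j, f i j)]
  refine prod_congr rfl (fun j _ => ?_)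
  refine prod_bij (fun i _ => (i : ℕ)) ?_ ?_ ?_ ?_
  · intro i hi
    exact mem_range.2 (Fin.lt_def.1 (mem_Iio.1 hi))
  · intro i _ k _ h
    exact Fin.ext h
  · intro k hk
    have := mem_range.1 hk
    exact ⟨⟨k, by omega⟩, mem_Iio.2 (Fin.lt_def.2 this), rfl⟩
  · intros; rfl

theorem DD_eq (q : ℂ) (N : ℕ) : DD q N = (∏ j ∈ range (N + 1), ∏ i ∈ range j, (1 - q ^ (j - i))) *
    (∏ j ∈ range (N + 1), ∏ i ∈ range j, (1 - q ^ (i + j))) := by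
  unfold DD
  rw [prod_rev, ← prod_mul_distrib]
  simp_rw [← prod_mul_distrib]
  rw [← prod_tri (N + 1) (fun i j => (1 - q ^ (j - i)) * (1 - q ^ (i + j)))]
  refine prod_congr rfl (fun i _ => prod_congr rfl (fun j hj => ?_))
  have hi : ((Fin.rev i : Fin (N + 1)) : ℕ) = (N - i : ℤ) := by rw [Fin.val_rev]; omega
  have hj' : ((Fin.rev j : Fin (N + 1)) : ℕ) = (N - j : ℤ) := by rw [Fin.val_rev]; omega
  have h1 : (i : ℕ) < j := Fin.lt_def.1 (mem_Ioi.1 hj)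
  rw [hi, hj', ← zpow_natCast, ← zpow_natCast]
  congr 3
  · omega
  · push_cast; ring

theorem V_eq (q : ℂ) (N : ℕ) : (Matrix.vandermonde (fun i : Fin (N + 1) => q ^ (i : ℕ))).det =
    (∏ j ∈ range (N + 1), ∏ i ∈ range j, (-q ^ i)) * (∏ j ∈ range (N + 1), ∏ i ∈ range j, (1 - q ^ (j - i))) := by
  rw [Matrix.det_vandermonde, prod_tri (N + 1) (fun i j => q ^ j - q ^ i), ← prod_mul_distrib]
  simp_rw [← prod_mul_distrib]
  refine prod_congr rfl (fun j _ => prod_congr rfl (fun i hi => ?_))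
  have := mem_range.1 hi
  have e : q ^ j = q ^ i * q ^ (j - i) := by rw [← pow_add]; congr 1; omega
  rw [e]; ring

theorem qq_id (q : ℂ) (N : ℕ) : (∏ j ∈ range (N + 1), ∏ i ∈ range j, (1 - q ^ (j - i))) *
    (∏ j ∈ range (N + 1), ∏ i ∈ range j, (1 - q ^ (i + j))) ^ 2 * (∏ i ∈ range N, (1 + q ^ (i + 1))) =
    ∏ r ∈ range (N + 1), qPoch q q (N + r) := by
  induction N with
  | zero => simp [qPoch]
  | succ N ih =>
    rw [prod_range_succ (fun j => ∏ i ∈ range j, (1 - q ^ (j - i))) (N + 1),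
      prod_range_succ (fun j => ∏ i ∈ range j, (1 - q ^ (i + j))) (N + 1),
      prod_range_succ (fun i => 1 + q ^ (i + 1)) N, prod_range_succ (fun r => qPoch q q (N + 1 + r)) (N + 1)]
    have e1 : ∀ r, qPoch q q (N + 1 + r) = qPoch q q (N + r) * (1 - q ^ (r + (N + 1))) := by
      intro r
      rw [show N + 1 + r = N + r + 1 by ring, qPoch_succ]; ring
    rw [prod_congr rfl (fun r _ => e1 r), prod_mul_distrib, ← ih, qPoch_add]
    have e2 : qPoch q q (N + 1) = ∏ i ∈ range (N + 1), (1 - q ^ (N + 1 - i)) := by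
      unfold qPoch
      rw [← prod_range_reflect]
      refine prod_congr rfl (fun i hi => ?_)
      have := mem_range.1 hi
      rw [← pow_succ', show N + 1 - 1 - i + 1 = N + 1 - i by omega]
    have e3 : qPoch (q * q ^ (N + 1)) q (N + 1) = (∏ i ∈ range (N + 1), (1 - q ^ (i + (N + 1)))) * (1 + q ^ (N + 1)) := by
      unfold qPoch
      rw [prod_range_succ, prod_range_succ']
      have : ∀ i, 1 - q * q ^ (N + 1) * q ^ i = 1 - q ^ (i + 1 + (N + 1)) := by intro i; ring
      simp_rw [this]
      ring
    rw [e2, e3]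
    ring

theorem E_id {q B : ℂ} (hq : q ≠ 0) (hB : B ≠ 0) (N : ℕ) :
    ∏ r ∈ range (N + 1), ((∏ k ∈ range r, (-1 / (B ^ 2 * q ^ (3 * k)))) * (∏ k ∈ range (N + r), (-(B * q ^ k)))) =
    ∏ r ∈ range (N + 1), (q ^ (2 * r ^ 2) * (B / q) ^ r) := by
  induction N with
  | zero => simp
  | succ N ih =>
    have e1 : ∀ r, (∏ k ∈ range (N + 1 + r), (-(B * q ^ k))) = (∏ k ∈ range (N + r), (-(B * q ^ k))) * (-(B * q ^ (N + r))) := by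
      intro r
      rw [show N + 1 + r = N + r + 1 by ring, prod_range_succ]
    have e2 : ∏ k ∈ range (N + 1 + (N + 1)), (-(B * q ^ k)) = (∏ k ∈ range (N + 1), (-(B * q ^ k))) * ∏ k ∈ range (N + 1), (-(B * q ^ (N + 1 + k))) :=
      prod_range_add _ _ _
    have e3 : ∀ k, -(B * q ^ (N + k)) * (-1 / (B ^ 2 * q ^ (3 * k)) * (-(B * q ^ k) * -(B * q ^ (N + 1 + k)))) = B * q ^ (2 * N + 1) := by
      intro k
      have := pow_ne_zero k hq
      have := pow_ne_zero N hq
      simp only [pow_add, pow_mul', mul_comm 3 k, mul_comm 2 N, pow_one]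
      field_simp
      ring
    have step : (∏ k ∈ range (N + 1), (-(B * q ^ (N + k)))) * ((∏ k ∈ range (N + 1), (-1 / (B ^ 2 * q ^ (3 * k)))) *
        ((∏ k ∈ range (N + 1), (-(B * q ^ k))) * ∏ k ∈ range (N + 1), (-(B * q ^ (N + 1 + k))))) =
        q ^ (2 * (N + 1) ^ 2) * (B / q) ^ (N + 1) := by
      rw [← prod_mul_distrib, ← prod_mul_distrib, ← prod_mul_distrib, prod_congr rfl (fun k _ => e3 k)]
      rw [prod_const, card_range, mul_pow, ← pow_mul, div_pow]
      rw [show 2 * (N + 1) ^ 2 = (2 * N + 1) * (N + 1) + (N + 1) by ring, pow_add]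
      have := pow_ne_zero (N + 1) hq
      field_simp
      ring
    rw [prod_range_succ (fun r => q ^ (2 * r ^ 2) * (B / q) ^ r) (N + 1), ← step, ← ih, prod_range_succ _ (N + 1), e2]
    have e4 : ∏ r ∈ range (N + 1), ((∏ k ∈ range r, (-1 / (B ^ 2 * q ^ (3 * k)))) * (∏ k ∈ range (N + 1 + r), (-(B * q ^ k)))) =
      (∏ r ∈ range (N + 1), ((∏ k ∈ range r, (-1 / (B ^ 2 * q ^ (3 * k)))) * (∏ k ∈ range (N + r), (-(B * q ^ k))))) *
       ∏ r ∈ range (N + 1), (-(B * q ^ (N + r))) := by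
      rw [← prod_mul_distrib]
      refine prod_congr rfl (fun r _ => ?_)
      rw [e1]; ring
    rw [e4]
    ring

theorem P_eq (q : ℂ) (N : ℕ) : (∏ i ∈ Icc 1 (N + 1 - 1), (1 + q ^ (N + 1 - i))) = ∏ i ∈ range N, (1 + q ^ (i + 1)) := by
  refine prod_nbij' (fun i => N - i) (fun i => N - i) ?_ ?_ ?_ ?_ ?_
  · intro i hi; simp at hi ⊢; omega
  · intro i hi; simp at hi ⊢; omega
  · intro i hi; simp at hi ⊢; omega
  · intro i hi; simp at hi ⊢; omega
  · intro i hi; simp at hi ⊢; congr 1; omega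

theorem inf_down {q t : ℂ} (hq : q ≠ 0) (hq1 : ‖q‖ < 1) (ht : t ≠ 0) (r : ℕ) :
    qPochInf (q / t * q ^ (-(r : ℤ))) q = qPochInf (q / t) q * (∏ k ∈ range r, (-1 / (t * q ^ k))) * qPoch t q r := by
  induction r with
  | zero => simp [qPoch]
  | succ r ih =>
    have h := qInf_tail hq1 (q / t * q ^ (-((r + 1 : ℕ) : ℤ))) 1
    have e : q / t * q ^ (-((r + 1 : ℕ) : ℤ)) * q ^ 1 = q / t * q ^ (-(r : ℤ)) := by
      rw [mul_assoc, pow_one, ← zpow_add_one₀ hq]; congr 2; push_cast; ring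
    rw [e, ih] at h
    have : qPoch (q / t * q ^ (-((r + 1 : ℕ) : ℤ))) q 1 = -1 / (t * q ^ r) * (1 - t * q ^ r) := by
      simp only [qPoch, range_one, prod_singleton, pow_zero, mul_one]
      rw [zpow_neg, zpow_natCast, pow_succ]
      have := pow_ne_zero r hq
      field_simp
      ring
    rw [h, this, prod_range_succ, qPoch_succ t]
    ring

theorem vec_down {q t : ℂ} (hq : q ≠ 0) (hq1 : ‖q‖ < 1) (ht : t ≠ 0) (N : ℕ) :
    qPochInfVec (N + 1) (q / t) q = qPochInf (q / t) q ^ (N + 1) *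
      (∏ r ∈ range (N + 1), ∏ k ∈ range r, (-1 / (t * q ^ k))) * ∏ r ∈ range (N + 1), qPoch t q r := by
  unfold qPochInfVec
  rw [Fin.prod_univ_eq_prod_range (fun i => qPochInf (q / t * q ^ (-(i : ℤ))) q)]
  simp_rw [inf_down hq hq1 ht, prod_mul_distrib]
  simp

theorem vec_down2 {q t : ℂ} (hq : q ≠ 0) (hq1 : ‖q‖ < 1) (ht : t ≠ 0) (N : ℕ) (s : ℂ) (hs : q / t = s * q ^ N) :
    qPochInfVec (N + 1) s q = qPochInf (q / t) q ^ (N + 1) *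
      (∏ r ∈ range (N + 1), ∏ k ∈ range (N + r), (-1 / (t * q ^ k))) * ∏ r ∈ range (N + 1), qPoch t q (N + r) := by
  unfold qPochInfVec
  have : ∀ i : ℕ, s * q ^ (-(i : ℤ)) = q / t * q ^ (-((N + i : ℕ) : ℤ)) := by
    intro i
    rw [hs, mul_assoc, ← zpow_natCast q N, ← zpow_add₀ hq]
    congr 2; push_cast; ring
  rw [Fin.prod_univ_eq_prod_range (fun i => qPochInf (s * q ^ (-(i : ℤ))) q)]
  simp_rw [this, inf_down hq hq1 ht, prod_mul_distrib]
  simp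

theorem vec_up {q : ℂ} (hq : q ≠ 0) (hq1 : ‖q‖ < 1) (t : ℂ) (N M : ℕ) :
    qPochInfVec (N + 1) (t * q ^ (N + M)) q * ∏ r ∈ range (N + 1), qPoch t q (M + r) = qPochInf t q ^ (N + 1) := by
  unfold qPochInfVec
  rw [Fin.prod_univ_eq_prod_range (fun i => qPochInf (t * q ^ (N + M) * q ^ (-(i : ℤ))) q), ← prod_range_reflect,
    ← prod_mul_distrib]
  rw [prod_congr rfl (g := fun _ => qPochInf t q) ?_]
  · simp
  intro r hr
  have := mem_range.1 hr
  rw [qInf_tail hq1 t (M + r), mul_comm]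
  congr 2
  rw [mul_assoc, ← zpow_natCast q (N + M), ← zpow_add₀ hq, ← zpow_natCast q (M + r)]
  congr 2; omega




theorem core_alg {Dt pB Sn pb pc pd pbc pbd pcd V2 V3 P qq Kp Zp Q2 ib ic id Ebd Ebc Ecd EB IBn Ibn Icn Idn Iqn Ibcn Ibdn Icdn
    xb xc xd xq : ℂ} (h1 : Dt * pB = Sn * (pb * pc * pd * pbc * pbd * pcd) * V2)
    (h2 : Kp * (Zp * (pb * pc * pd)) = Q2 * (ib * ic * id)) (h3 : Ebd * Ebc * Ecd * Zp = EB * Q2)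
    (h4 : V2 * V3 ^ 2 * P = qq) (h5 : IBn * Icn * Ibn * Idn * Sn = Iqn * Ibcn * Ibdn * Icdn)
    (hb : xb * ib = Ibn) (hc : xc * ic = Icn) (hd : xd * id = Idn) (hx : xq * qq = Iqn)
    (n1 : pB ≠ 0) (n2 : pb ≠ 0) (n3 : pc ≠ 0) (n4 : pd ≠ 0) (n5 : Zp ≠ 0) (n6 : Q2 ≠ 0) (n7 : EB ≠ 0)
    (n8 : qq ≠ 0) (n9 : IBn ≠ 0) (m1 : Ibn ≠ 0) (m2 : Icn ≠ 0) (m3 : Idn ≠ 0) :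
    P * ((Ibdn * Ebd * pbd) * (Ibcn * Ebc * pbc) * xq * (Icdn * Ecd * pcd) / (IBn * EB * pB * xb * xc * xd)) =
    Kp / (V2 * V3) ^ 2 * Dt := by
  subst h4 hb hc hd
  have a1 : V2 ≠ 0 := by rintro rfl; simp at n8
  have a2 : V3 ≠ 0 := by rintro rfl; simp at n8
  have a3 : P ≠ 0 := by rintro rfl; simp at n8
  have a4 := left_ne_zero_of_mul m1
  have a5 := left_ne_zero_of_mul m2
  have a6 := left_ne_zero_of_mul m3
  have b4 := right_ne_zero_of_mul m1
  have b5 := right_ne_zero_of_mul m2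
  have b6 := right_ne_zero_of_mul m3
  have c1 : Dt = Sn * (pb * pc * pd * pbc * pbd * pcd) * V2 / pB := by rw [eq_div_iff n1, h1]
  have c2 : Kp = Q2 * (ib * ic * id) / (Zp * (pb * pc * pd)) := by
    rw [eq_div_iff (by positivity), h2]
  have c3 : Q2 = Ebd * Ebc * Ecd * Zp / EB := by rw [h3]; field_simp
  have c4 : Sn = Iqn * Ibcn * Ibdn * Icdn / (IBn * (xc * ic) * (xb * ib) * (xd * id)) := by
    rw [eq_div_iff (by positivity), ← h5]; ring
  rw [c1, c2, c3, c4, ← hx]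
  field_simp

theorem final {q b c d s : ℂ} (hq : q ≠ 0) (hq1 : ‖q‖ < 1) (hb : NP q b) (hc : NP q c) (hd : NP q d)
    (hB : NP q (b * c * d)) (N : ℕ) (hconv : ‖q / (b * c * d)‖ < ‖q‖ ^ (2 * N)) (hs : q / (b * c * d) = s * q ^ N) :
    (∏ i ∈ range N, (1 + q ^ (i + 1))) * (qPochInfVec (N + 1) (q / (b * d)) q * qPochInfVec (N + 1) (q / (b * c)) q *
      qPochInfVec (N + 1) (q * q ^ (N + N)) q * qPochInfVec (N + 1) (q / (c * d)) q /
      (qPochInfVec (N + 1) s q * qPochInfVec (N + 1) (q / b * q ^ N) q * qPochInfVec (N + 1) (q / c * q ^ N) q *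
        qPochInfVec (N + 1) (q / d * q ^ N) q)) =
    (∏ r ∈ range (N + 1), q ^ (2 * r ^ 2) / vW q b c d r) / DD q N ^ 2 *
     (Matrix.of (fun i j : Fin (N + 1) => ∑' y, vM q b c d y *
      ((Pc i).eval (q ^ y + (q ^ y)⁻¹) * (q ^ y + (q ^ y)⁻¹) ^ (j : ℕ)))).det := by
  have b0 := hb.1
  have c0 := hc.1
  have d0 := hd.1
  have qk : ∀ k : ℕ, q ^ k ≠ 0 := fun k => pow_ne_zero k hq
  have hD := det_main hq hq1 hb hc hd hB N hconv
  have hcv : ‖q / (b * c * d)‖ < 1 := hconv.trans_le (pow_le_one₀ (norm_nonneg _) hq1.le)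
  have hBa := bailey hq hq1 hb.nd hc.nd hd.nd hcv
  have ub := vec_up hq hq1 (q / b) N 0
  have uc := vec_up hq hq1 (q / c) N 0
  have ud := vec_up hq hq1 (q / d) N 0
  have uq := vec_up hq hq1 q N N
  simp only [zero_add, add_zero] at ub uc ud
  rw [vec_down hq hq1 (mul_ne_zero b0 d0), vec_down hq hq1 (mul_ne_zero b0 c0), vec_down hq hq1 (mul_ne_zero c0 d0),
    vec_down2 hq hq1 hB.1 N s hs, DD_eq]
  refine core_alg (Zp := ∏ r ∈ range (N + 1), (q / (b * c * d)) ^ r) (Q2 := ∏ r ∈ range (N + 1), q ^ (2 * r ^ 2))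
    (Sn := vS q b c d ^ (N + 1)) (pb := ∏ r ∈ range (N + 1), qPoch b q r) (pc := ∏ r ∈ range (N + 1), qPoch c q r)
    (pd := ∏ r ∈ range (N + 1), qPoch d q r) ?_ ?_ ?_ (qq_id q N) ?_ ub uc ud uq ?_ ?_ ?_ ?_ ?_ ?_ ?_ ?_ ?_ ?_ ?_ ?_
  · rw [V_eq] at hD
    have g : (∏ r ∈ range (N + 1), ∏ k ∈ range r, ((b * c * d * q ^ k - c * d) * q ^ k)) *
        (∏ j ∈ range (N + 1), ∏ i ∈ range j, (-q ^ i)) = (∏ r ∈ range (N + 1), qPoch b q r) *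
        (∏ r ∈ range (N + 1), ∏ k ∈ range r, ((c * q ^ k) * (d * q ^ k))) := by
      simp only [qPoch, ← prod_mul_distrib]
      refine prod_congr rfl (fun r _ => prod_congr rfl (fun k _ => ?_))
      ring
    have g1 : (∏ r ∈ range (N + 1), ∏ k ∈ range r, ((c * q ^ k) * (d * q ^ k))) ≠ 0 :=
      prod_ne_zero_iff.2 (fun r _ => prod_ne_zero_iff.2 (fun k _ => mul_ne_zero (mul_ne_zero c0 (qk k)) (mul_ne_zero d0 (qk k))))
    have g2 : ∏ r ∈ range (N + 1), qPoch (b * c * d) q (N + r) ≠ 0 := prod_ne_zero_iff.2 (fun r _ => hB.qPoch hq _)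
    rw [prod_div_distrib, prod_mul_distrib, prod_mul_distrib] at hD
    simp_rw [add_comm _ N] at hD
    apply mul_right_cancel₀ g1
    rw [mul_right_comm, hD]
    generalize (∏ r ∈ range (N + 1), ∏ k ∈ range r, ((c * q ^ k) * (d * q ^ k))) = A1 at *
    generalize (∏ r ∈ range (N + 1), ∏ k ∈ range r, ((b * c * d * q ^ k - c * d) * q ^ k)) = A2 at *
    generalize (∏ r ∈ range (N + 1), qPoch (b * c * d) q (N + r)) = A3 at *
    field_simp
    linear_combination (vS q b c d ^ (N + 1) * (∏ r ∈ range (N + 1), qPoch c q r) * (∏ r ∈ range (N + 1), qPoch (b * c) q r) *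
      (∏ r ∈ range (N + 1), qPoch d q r) * (∏ r ∈ range (N + 1), qPoch (b * d) q r) *
      (∏ r ∈ range (N + 1), qPoch (c * d) q r) * (∏ j ∈ range (N + 1), ∏ i ∈ range j, (1 - q ^ (j - i)))) * g
  · simp only [← prod_mul_distrib]
    refine prod_congr rfl (fun r _ => ?_)
    rw [vW_eq hq hq1 hb hc hd]
    have := hb.qPoch hq r
    have := hc.qPoch hq r
    have := hd.qPoch hq r
    have := (hb.inv hq).qPoch hq r
    have := (hc.inv hq).qPoch hq r
    have := (hd.inv hq).qPoch hq r
    have : (q / (b * c * d)) ^ r ≠ 0 := pow_ne_zero _ (div_ne_zero hq hB.1)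
    generalize (q / (b * c * d)) ^ r = z at *
    field_simp
  · have e := E_id hq hB.1 N
    have hE : (∏ r ∈ range (N + 1), ∏ k ∈ range (N + r), (-1 / (b * c * d * q ^ k))) *
       (∏ r ∈ range (N + 1), ∏ k ∈ range (N + r), (-(b * c * d * q ^ k))) = 1 := by
      simp only [← prod_mul_distrib]
      refine prod_eq_one (fun r _ => prod_eq_one (fun k _ => ?_))
      have := qk k
      field_simp
    have h3 : (∏ r ∈ range (N + 1), ∏ k ∈ range r, (-1 / (b * d * q ^ k))) *
        (∏ r ∈ range (N + 1), ∏ k ∈ range r, (-1 / (b * c * q ^ k))) *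
        (∏ r ∈ range (N + 1), ∏ k ∈ range r, (-1 / (c * d * q ^ k))) =
        ∏ r ∈ range (N + 1), ∏ k ∈ range r, (-1 / ((b * c * d) ^ 2 * q ^ (3 * k))) := by
      simp only [← prod_mul_distrib]
      refine prod_congr rfl (fun r _ => prod_congr rfl (fun k _ => ?_))
      have := qk k
      rw [mul_comm 3 k, pow_mul]
      field_simp
    have hz : (∏ r ∈ range (N + 1), (q / (b * c * d)) ^ r) * (∏ r ∈ range (N + 1), (b * c * d / q) ^ r) = 1 := by
      simp only [← prod_mul_distrib]
      refine prod_eq_one (fun r _ => ?_)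
      rw [← mul_pow]
      have : q / (b * c * d) * (b * c * d / q) = 1 := by field_simp
      rw [this, one_pow]
    rw [h3]
    rw [prod_mul_distrib, prod_mul_distrib] at e
    generalize (∏ r ∈ range (N + 1), ∏ k ∈ range r, (-1 / ((b * c * d) ^ 2 * q ^ (3 * k)))) = E3 at *
    generalize (∏ r ∈ range (N + 1), ∏ k ∈ range (N + r), (-1 / (b * c * d * q ^ k))) = EB at *
    generalize (∏ r ∈ range (N + 1), ∏ k ∈ range (N + r), (-(b * c * d * q ^ k))) = EC at *
    generalize (∏ r ∈ range (N + 1), (q / (b * c * d)) ^ r) = Z at *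
    generalize (∏ r ∈ range (N + 1), (b * c * d / q) ^ r) = Y at *
    generalize (∏ r ∈ range (N + 1), q ^ (2 * r ^ 2)) = Q at *
    linear_combination (EB * Z) * e - E3 * Z * hE + EB * Q * hz
  · simp only [← mul_pow]
    rw [hBa]
  · exact prod_ne_zero_iff.2 (fun r _ => hB.qPoch hq _)
  · exact prod_ne_zero_iff.2 (fun r _ => hb.qPoch hq _)
  · exact prod_ne_zero_iff.2 (fun r _ => hc.qPoch hq _)
  · exact prod_ne_zero_iff.2 (fun r _ => hd.qPoch hq _)
  · exact prod_ne_zero_iff.2 (fun r _ => pow_ne_zero _ (div_ne_zero hq hB.1))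
  · exact prod_ne_zero_iff.2 (fun r _ => qk _)
  · refine prod_ne_zero_iff.2 (fun r _ => prod_ne_zero_iff.2 (fun k _ => ?_))
    exact div_ne_zero (by norm_num) (mul_ne_zero hB.1 (qk k))
  · refine prod_ne_zero_iff.2 (fun r _ => prod_ne_zero_iff.2 (fun k _ => ?_))
    have := pow_ne_one' hq1 k
    rwa [pow_succ'] at this
  · exact pow_ne_zero _ ((hB.inv hq).inf hq hq1)
  · exact pow_ne_zero _ ((hb.inv hq).inf hq hq1)
  · exact pow_ne_zero _ ((hc.inv hq).inf hq hq1)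
  · exact pow_ne_zero _ ((hd.inv hq).inf hq hq1)


end

/-- the multilateral analogue of Bailey's `₃ψ₃` summation (`δ = 0` case). -/
theorem multilateral_3psi3_delta_zero (n : ℕ) (hn : 0 < n) (q s a x : ℂ)
    (hq0 : 0 < ‖q‖) (hq1 : ‖q‖ < 1)
    (ha0 : a ≠ 0) (hx0 : x ≠ 0) (hs0 : s ≠ 0)
    (h : ∀ m : ℤ, s ≠ q ^ m ∧ a * s ≠ q ^ m ∧ x ≠ q ^ m ∧ a * x ≠ q ^ m ∧
      s * x⁻¹ ≠ q ^ m ∧ a * s * x ≠ q ^ m)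
    (F : (Fin n → ℤ) → ℂ)
    (hF : ∀ μ : Fin n → ℤ, F μ =
      q ^ ((1 - (n : ℤ)) * (∑ i : Fin n, μ i) + 2 * ∑ i : Fin n, ((i : ℕ) : ℤ) * μ i) * s ^ (∑ i : Fin n, μ i) *
      (qPochIntVec n (q ^ (2 * (n : ℤ) - 1) / (a * s)) q μ * qPochIntVec n x⁻¹ q μ *
        qPochIntVec n (a * x) q μ /
        (qPochIntVec n (a * s) q μ * qPochIntVec n (q ^ (2 * (n : ℤ) - 1) * x) q μ *
          qPochIntVec n (q ^ (2 * (n : ℤ) - 1) / (a * x)) q μ)) *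
      ∏ i : Fin n, ∏ j ∈ Finset.Ioi i,
        ((1 - q ^ (((j : ℕ) : ℤ) - ((i : ℕ) : ℤ) + μ i - μ j)) *
          (1 - q ^ (2 * (n : ℤ) - 2 - ((i : ℕ) : ℤ) - ((j : ℕ) : ℤ) + μ i + μ j)) /
          ((1 - q ^ (((j : ℕ) : ℤ) - ((i : ℕ) : ℤ))) ^ 2 *
            (1 - q ^ (2 * (n : ℤ) - 2 - ((i : ℕ) : ℤ) - ((j : ℕ) : ℤ))) ^ 2)))
    (hsum : Summable F) :
    (∏ i ∈ Finset.Icc 1 (n - 1), (1 + q ^ (n - i))) *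
      (qPochInfVec n (s * x⁻¹) q * qPochInfVec n (a * s * x) q *
        qPochInfVec n (q ^ (2 * (n : ℤ) - 1)) q *
        qPochInfVec n (q ^ (2 * (n : ℤ) - 1) / a) q /
        (qPochInfVec n s q * qPochInfVec n (a * s) q *
          qPochInfVec n (q ^ (2 * (n : ℤ) - 1) * x) q *
          qPochInfVec n (q ^ (2 * (n : ℤ) - 1) / (a * x)) q))
    = ∑' μ : Fin n → ℤ, F μ := by
  have hq : q ≠ 0 := norm_pos_iff.1 hq0
  obtain ⟨N, rfl⟩ : ∃ N, n = N + 1 := ⟨n - 1, by omega⟩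
  have qN : q ^ N ≠ 0 := pow_ne_zero N hq
  have as0 : NP q (a * s) := ⟨mul_ne_zero ha0 hs0, fun m => (h m).2.1⟩
  have s1 : NP q s := ⟨hs0, fun m => (h m).1⟩
  have x1 : NP q x := ⟨hx0, fun m => (h m).2.2.1⟩
  have ax1 : NP q (a * x) := ⟨mul_ne_zero ha0 hx0, fun m => (h m).2.2.2.1⟩
  have e0 : q ^ (2 * ((N + 1 : ℕ) : ℤ) - 1) = q * q ^ (N + N) := by
    rw [← pow_succ', ← zpow_natCast]
    congr 1
    push_cast
    ring
  have hb : NP q (q / (a * s) * q ^ N) := (as0.inv hq).mul_nat hq N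
  have hc : NP q (q / x * q ^ (-((N + 1 : ℕ) : ℤ))) := (x1.inv hq).mul hq _
  have hd : NP q (a * x * q ^ (-(N : ℤ))) := ax1.mul hq _
  have ec : q / x * q ^ (-((N + 1 : ℕ) : ℤ)) = x⁻¹ / q ^ N := by
    rw [zpow_neg, zpow_natCast, pow_succ]
    field_simp
  have ed : a * x * q ^ (-(N : ℤ)) = a * x / q ^ N := by
    rw [zpow_neg, zpow_natCast, div_eq_mul_inv]
  rw [ec] at hc
  rw [ed] at hd
  have hB0 := (s1.mul_nat hq N).inv hq
  obtain ⟨b, eb⟩ : ∃ b, b = q / (a * s) * q ^ N := ⟨_, rfl⟩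
  obtain ⟨c, ec'⟩ : ∃ c, c = x⁻¹ / q ^ N := ⟨_, rfl⟩
  obtain ⟨d, ed'⟩ : ∃ d, d = a * x / q ^ N := ⟨_, rfl⟩
  have r1 : q / (b * c * d) = s * q ^ N := by
    rw [eb, ec', ed']
    field_simp
  have r1' : q / (s * q ^ N) = b * c * d := by
    rw [eb, ec', ed']
    field_simp
  have r2 : q ^ (2 * ((N + 1 : ℕ) : ℤ) - 1) / (a * s) = b * q ^ N := by
    rw [e0, eb, pow_add]
    ring
  have r3 : x⁻¹ = c * q ^ N := by
    rw [ec']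
    field_simp
  have r4 : a * x = d * q ^ N := by
    rw [ed']
    field_simp
  have r5 : a * s = q / b * q ^ N := by
    rw [eb]
    field_simp
  have r6 : q ^ (2 * ((N + 1 : ℕ) : ℤ) - 1) * x = q / c * q ^ N := by
    rw [e0, ec', pow_add]
    field_simp
  have r7 : q ^ (2 * ((N + 1 : ℕ) : ℤ) - 1) / (a * x) = q / d * q ^ N := by
    rw [e0, ed', pow_add]
    field_simp
  have r8 : s * x⁻¹ = q / (b * d) := by
    rw [eb, ed']
    field_simp
  have r9 : a * s * x = q / (b * c) := by
    rw [eb, ec']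
    field_simp
  have r10 : q ^ (2 * ((N + 1 : ℕ) : ℤ) - 1) / a = q / (c * d) := by
    rw [e0, ec', ed', pow_add]
    field_simp
  rw [r1'] at hB0
  rw [← eb] at hb
  rw [← ec'] at hc
  rw [← ed'] at hd
  have hF2 : ∀ μ, F μ = (∏ r ∈ Finset.range (N + 1), q ^ (2 * r ^ 2) / vW q b c d r) / DD q N ^ 2 *
      GG q b c d N (fun r => μ (Fin.rev r) + ((r : ℕ) : ℤ)) := fun μ => by
    have h0 := hF μ
    rw [r2, r6, r7, r3, r4, r5, F_rw hq hq1 hb hc hd N r1 hs0 μ] at h0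
    exact h0
  obtain ⟨hconv, hS⟩ := F_sum hq hq1 hb hc hd N F hF2 hsum
  rw [hS, r6, r7, r8, r9, r10, r5, e0, P_eq, final hq hq1 hb hc hd hB0 N hconv r1]
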